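/- arXiv:1711.01064 — 8 statements merged into one kernel-verified Lean document; each statement's English description precedes it below -/
import Mathlib

section
/- For any nonzero complex numbers a, z, any complex numbers w_1, …, w_{x_1-1}, and any integer x_1 ≥ 1, the following identity holds: (a²−a⁻²)(z²−z⁻²) Σ_{j=1}^{x_1−1} w_j ∏_{k=1}^{j−1}(az⁻¹−a⁻¹z w_k)(az⁻¹w_k−a⁻¹z) ∏_{k=j+1}^{x_1−1}(az w_k−a⁻¹z⁻¹)(az−a⁻¹z⁻¹w_k) = ∏_{k=1}^{x_1−1}(az w_k−a⁻¹z⁻¹)(az−a⁻¹z⁻¹w_k) − ∏_{k=1}^{x_1−1}(az⁻¹w_k−a⁻¹z)(az⁻¹−a⁻¹z w_k). -/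
open Finset

/-!
Write `b = a⁻¹` and `y = z⁻¹`. The two factors at `k` are exchanged by `z ↔ y`, and by a polynomial
identity in `a`, `b`, `z`, `y`, `w k` they differ by `w k` times a constant. So the left-hand side
is the telescoping sum which turns one product into the other, one factor at a time.
-/

section CommRing

variable {ι R : Type*} [CommRing R]

theorem prod_sub_prod_eq_sum_ordered [LinearOrder ι] (s : Finset ι) (f g : ι → R) :
    ∏ i ∈ s, f i - ∏ i ∈ s, g i =
      ∑ i ∈ s, (f i - g i) * (∏ j ∈ s with j < i, g j) * ∏ j ∈ s with i < j, f j := by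
  have expand_g := prod_sub_ordered s f fun i => f i - g i
  simp only [sub_sub_cancel] at expand_g
  rw [expand_g, sub_sub_cancel]

theorem factor_sub_factor_swap (a b z y w : R) :
    (a * z * w - b * y) * (a * z - b * y * w) - (a * y - b * z * w) * (a * y * w - b * z) =
      (a ^ 2 - b ^ 2) * (z ^ 2 - y ^ 2) * w := by
  ring

theorem lemma_identity_general [LinearOrder ι] (a b z y : R) (w : ι → R) (s : Finset ι) :
    (a ^ 2 - b ^ 2) * (z ^ 2 - y ^ 2) *
      ∑ j ∈ s, w j *
        (∏ k ∈ s with k < j, (a * y - b * z * w k) * (a * y * w k - b * z)) *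
        (∏ k ∈ s with j < k, (a * z * w k - b * y) * (a * z - b * y * w k))
    = (∏ k ∈ s, (a * z * w k - b * y) * (a * z - b * y * w k))
      - (∏ k ∈ s, (a * y * w k - b * z) * (a * y - b * z * w k)) := by
  simp only [mul_comm (a * y * _ - b * z), prod_sub_prod_eq_sum_ordered, factor_sub_factor_swap]
  simp only [mul_sum, mul_assoc]

end CommRing

theorem sum_Icc_one_mul_prod_mul_prod {R : Type*} [CommSemiring R] (n : ℕ) (w f g : ℕ → R) :
    ∑ j ∈ Icc 1 n, w j * (∏ k ∈ Icc 1 (j - 1), f k) * (∏ k ∈ Icc (j + 1) n, g k) =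
      ∑ j ∈ Icc 1 n, w j * (∏ k ∈ Icc 1 n with k < j, f k) * ∏ k ∈ Icc 1 n with j < k, g k := by
  refine sum_congr rfl fun j hj => ?_
  have below : Icc 1 (j - 1) = {k ∈ Icc 1 n | k < j} := by grind
  have above : Icc (j + 1) n = {k ∈ Icc 1 n | j < k} := by grind
  rw [below, above]

/-- Lemma 3.1: the telescoping identity used in the computation of the simplest
wavefunction of the six-vertex model with reflecting end.  Products over empty
ranges equal 1 and sums over empty ranges equal 0. -/
theorem lemma_identity (a z : ℂ) (ha : a ≠ 0) (hz : z ≠ 0)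
    (w : ℕ → ℂ) (x₁ : ℕ) (hx₁ : 1 ≤ x₁) :
    (a ^ (2:ℤ) - a ^ (-2:ℤ)) * (z ^ (2:ℤ) - z ^ (-2:ℤ)) *
      ∑ j ∈ Finset.Icc 1 (x₁ - 1), w j *
        (∏ k ∈ Finset.Icc 1 (j - 1),
          (a * z⁻¹ - a⁻¹ * z * w k) * (a * z⁻¹ * w k - a⁻¹ * z)) *
        (∏ k ∈ Finset.Icc (j + 1) (x₁ - 1),
          (a * z * w k - a⁻¹ * z⁻¹) * (a * z - a⁻¹ * z⁻¹ * w k))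
    = (∏ k ∈ Finset.Icc 1 (x₁ - 1),
        (a * z * w k - a⁻¹ * z⁻¹) * (a * z - a⁻¹ * z⁻¹ * w k))
      - (∏ k ∈ Finset.Icc 1 (x₁ - 1),
        (a * z⁻¹ * w k - a⁻¹ * z) * (a * z⁻¹ - a⁻¹ * z * w k)) := by
  rw [sum_Icc_one_mul_prod_mul_prod]
  simpa using lemma_identity_general a a⁻¹ z z⁻¹ w (Finset.Icc 1 (x₁ - 1))
end

section
/- For nonzero complex numbers a, b, z with z⁴ ≠ 1, complex numbers w_1, …, w_M, and an integer 1 ≤ x_1 ≤ M, the following identity holds: (a²−a⁻²) ∏_{k=x_1+1}^{M}(az⁻¹−a⁻¹z w_k)(az−a⁻¹z⁻¹w_k) × { (baz−b⁻¹a⁻¹z⁻¹) ∏_{k=1}^{x_1−1}(az w_k−a⁻¹z⁻¹) ∏_{k=1}^{x_1}(az−a⁻¹z⁻¹w_k) + (ba⁻¹z⁻¹−b⁻¹az)(az w_{x_1}−a⁻¹z⁻¹) ∏_{k=1}^{x_1−1}(az⁻¹−a⁻¹z w_k)(az⁻¹w_k−a⁻¹z) + (a²−a⁻²)² Σ_{j=1}^{x_1−1}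 w_j (ba⁻¹z⁻¹−b⁻¹az) ∏_{k=1}^{j−1}(az⁻¹−a⁻¹z w_k)(az⁻¹w_k−a⁻¹z) ∏_{k=j+1}^{x_1−1}(az w_k−a⁻¹z⁻¹) ∏_{k=j+1}^{x_1}(az−a⁻¹z⁻¹w_k) } = (a²−a⁻²)(−a²z²+a⁻²z⁻²) Σ_{τ=±1} (z^{2τ}−z^{−2τ})⁻¹ (ba⁻¹z^{−τ}−b⁻¹az^{τ}) ∏_{j=1}^{M}(az^{−τ}−a⁻¹z^{τ}w_j) ∏_{j=1}^{x_1−1}(az^{−τ}w_j−a⁻¹z^{τ}) ∏_{j=x_1+1}^{M}(az^{τ}−a⁻¹z^{−τ}w_j). -/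
open Finset

/-!
Pairing the two factors that a site contributes turns the sum over `j` into a telescoping one:
with `Q k` the pair at `z` and `P k` the pair at `z⁻¹`, one has
`Q k - P k = (a² - a⁻²) (z² - z⁻²) w k`, so that, once multiplied by `(a² - a⁻²) (z² - z⁻²)`, the
sum collapses to `∏ Q - ∏ P`. What then multiplies `∏ Q` and `∏ P` reduces to a single product by
one identity for the reflecting end and one for the site `x₁`.
-/

lemma prod_Icc_mul_prod_Icc_add_one {R : Type*} [CommMonoid R] (f : ℕ → R) {l m n : ℕ}
    (hlm : l ≤ m + 1) (hmn : m ≤ n) :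
    (∏ k ∈ Icc l m, f k) * ∏ k ∈ Icc (m + 1) n, f k = ∏ k ∈ Icc l n, f k := by
  simpa only [Ico_add_one_right_eq_Icc] using
    prod_Ico_consecutive f hlm (Nat.add_le_add_right hmn 1)

lemma prod_sub_prod_eq_sum_Icc {R : Type*} [CommRing R] (f g : ℕ → R) {l : ℕ} (hl : 0 < l)
    (n : ℕ) :
    (∏ k ∈ Icc l n, f k) - ∏ k ∈ Icc l n, g k =
      ∑ j ∈ Icc l n,
        (f j - g j) * (∏ k ∈ Icc l (j - 1), g k) * ∏ k ∈ Icc (j + 1) n, f k := by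
  have h := prod_sub_ordered (Icc l n) f (f - g)
  simp only [Pi.sub_apply, sub_sub_cancel] at h
  rw [h, sub_sub_cancel]
  refine sum_congr rfl fun j hj ↦ ?_
  rw [mem_Icc] at hj
  have below : {k ∈ Icc l n | k < j} = Icc l (j - 1) := by grind
  have above : {k ∈ Icc l n | j < k} = Icc (j + 1) n := by grind
  rw [below, above]

lemma sum_mul_prod_succ_eq_mul_sum {R : Type*} [CommSemiring R] (r : R)
    (w p f g : ℕ → R) (n : ℕ) :
    ∑ j ∈ Icc 1 n, w j * r * (∏ k ∈ Icc 1 (j - 1), p k) * (∏ k ∈ Icc (j + 1) n, g k) *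
        (∏ k ∈ Icc (j + 1) (n + 1), f k) =
      r * f (n + 1) *
        ∑ j ∈ Icc 1 n, w j * (∏ k ∈ Icc 1 (j - 1), p k) * ∏ k ∈ Icc (j + 1) n, f k * g k := by
  rw [mul_sum]
  refine sum_congr rfl fun j hj ↦ ?_
  rw [prod_Icc_succ_top (by grind), prod_mul_distrib]
  ring

section Weights

variable {K : Type*} [Field K]

/-- The first diagonal weight of the `L`-operator with parameter `a` and spectral parameter
`z`, at a site with inhomogeneity `u`. -/
def diagWeight₁ (a z u : K) : K := a * z - a⁻¹ * z⁻¹ * u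

/-- The second diagonal weight of the `L`-operator with parameter `a` and spectral parameter
`z`, at a site with inhomogeneity `u`. -/
def diagWeight₂ (a z u : K) : K := a * z * u - a⁻¹ * z⁻¹

/-- A weight of the diagonal reflecting end. The other one is obtained by inverting `a` and `z`;
the coefficients `b` and `c` are independent, with `c = b⁻¹` for the six-vertex model. -/
def reflectionWeight (b c a z : K) : K := b * a⁻¹ * z⁻¹ - c * a * z

variable {a z : K}

lemma diagWeight_mul_sub_diagWeight_mul_inv (ha : a ≠ 0) (hz : z ≠ 0) (u : K) :
    diagWeight₁ a z u * diagWeight₂ a z u - diagWeight₁ a z⁻¹ u * diagWeight₂ a z⁻¹ u =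
      (a ^ (2:ℤ) - a ^ (-2:ℤ)) * (z ^ (2:ℤ) - z ^ (-2:ℤ)) * u := by
  simp only [diagWeight₁, diagWeight₂]
  field_simp
  ring

lemma reflectionWeight_inv_mul_add_mul_reflectionWeight (b c : K) (ha : a ≠ 0) (hz : z ≠ 0) :
    reflectionWeight b c a⁻¹ z⁻¹ * (z ^ (2:ℤ) - z ^ (-2:ℤ)) +
        (a ^ (2:ℤ) - a ^ (-2:ℤ)) * reflectionWeight b c a z =
      (a ^ (2:ℤ) * z ^ (2:ℤ) - a ^ (-2:ℤ) * z ^ (-2:ℤ)) * reflectionWeight b c a z⁻¹ := by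
  simp only [reflectionWeight]
  field_simp
  ring

lemma diagWeight₂_mul_sub_mul_diagWeight₁ (ha : a ≠ 0) (hz : z ≠ 0) (u : K) :
    diagWeight₂ a z u * (z ^ (2:ℤ) - z ^ (-2:ℤ)) -
        (a ^ (2:ℤ) - a ^ (-2:ℤ)) * diagWeight₁ a z u =
      -((a ^ (2:ℤ) * z ^ (2:ℤ) - a ^ (-2:ℤ) * z ^ (-2:ℤ)) * diagWeight₁ a z⁻¹ u) := by
  simp only [diagWeight₁, diagWeight₂]
  field_simp
  ring

lemma zpow_two_sub_zpow_neg_two_ne_zero (hz : z ≠ 0) (hz4 : z ^ 4 ≠ 1) :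
    z ^ (2:ℤ) - z ^ (-2:ℤ) ≠ 0 := by
  contrapose! hz4
  field_simp at hz4
  linear_combination hz4

lemma mul_sum_diagWeight (ha : a ≠ 0) (hz : z ≠ 0) (w : ℕ → K) (n : ℕ) :
    (a ^ (2:ℤ) - a ^ (-2:ℤ)) * (z ^ (2:ℤ) - z ^ (-2:ℤ)) *
        ∑ j ∈ Icc 1 n, w j *
          (∏ k ∈ Icc 1 (j - 1), diagWeight₁ a z⁻¹ (w k) * diagWeight₂ a z⁻¹ (w k)) *
          ∏ k ∈ Icc (j + 1) n, diagWeight₁ a z (w k) * diagWeight₂ a z (w k) =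
      (∏ k ∈ Icc 1 n, diagWeight₁ a z (w k) * diagWeight₂ a z (w k)) -
        ∏ k ∈ Icc 1 n, diagWeight₁ a z⁻¹ (w k) * diagWeight₂ a z⁻¹ (w k) := by
  simp only [prod_sub_prod_eq_sum_Icc _ _ one_pos, diagWeight_mul_sub_diagWeight_mul_inv ha hz,
    mul_sum, mul_assoc]

/-- The expansion of the one-particle wavefunction, with the particle at site `n + 1`, into matrix
elements of `B`- and `D`-operators. The common prefactor `a² - a⁻²` and the weights of the sites
beyond `n + 1` are left out. -/
def wavefunctionExpansion (b c a z : K) (w : ℕ → K) (n : ℕ) : K :=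
  reflectionWeight b c a⁻¹ z⁻¹ * (∏ k ∈ Icc 1 n, diagWeight₂ a z (w k)) *
      (∏ k ∈ Icc 1 (n + 1), diagWeight₁ a z (w k)) +
    reflectionWeight b c a z * diagWeight₂ a z (w (n + 1)) *
      (∏ k ∈ Icc 1 n, diagWeight₁ a z⁻¹ (w k) * diagWeight₂ a z⁻¹ (w k)) +
    (a ^ (2:ℤ) - a ^ (-2:ℤ)) ^ 2 *
      ∑ j ∈ Icc 1 n, w j * reflectionWeight b c a z *
        (∏ k ∈ Icc 1 (j - 1), diagWeight₁ a z⁻¹ (w k) * diagWeight₂ a z⁻¹ (w k)) *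
        (∏ k ∈ Icc (j + 1) n, diagWeight₂ a z (w k)) *
        (∏ k ∈ Icc (j + 1) (n + 1), diagWeight₁ a z (w k))

lemma mul_wavefunctionExpansion (b c : K) (ha : a ≠ 0) (hz : z ≠ 0) (w : ℕ → K) (n : ℕ) :
    (z ^ (2:ℤ) - z ^ (-2:ℤ)) * wavefunctionExpansion b c a z w n =
      (a ^ (2:ℤ) * z ^ (2:ℤ) - a ^ (-2:ℤ) * z ^ (-2:ℤ)) *
        (reflectionWeight b c a z⁻¹ * (∏ k ∈ Icc 1 (n + 1), diagWeight₁ a z (w k)) *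
            (∏ k ∈ Icc 1 n, diagWeight₂ a z (w k)) -
          reflectionWeight b c a z * (∏ k ∈ Icc 1 (n + 1), diagWeight₁ a z⁻¹ (w k)) *
            ∏ k ∈ Icc 1 n, diagWeight₂ a z⁻¹ (w k)) := by
  have telescope := mul_sum_diagWeight ha hz w n
  have reflection := reflectionWeight_inv_mul_add_mul_reflectionWeight b c ha hz
  have site := diagWeight₂_mul_sub_mul_diagWeight₁ ha hz (w (n + 1))
  rw [wavefunctionExpansion, sum_mul_prod_succ_eq_mul_sum]
  simp only [prod_mul_distrib, prod_Icc_succ_top (Nat.le_add_left 1 n)] at telescope ⊢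
  linear_combination
    (∏ k ∈ Icc 1 n, diagWeight₂ a z (w k)) * (∏ k ∈ Icc 1 n, diagWeight₁ a z (w k)) *
        diagWeight₁ a z (w (n + 1)) * reflection +
      reflectionWeight b c a z * (∏ k ∈ Icc 1 n, diagWeight₁ a z⁻¹ (w k)) *
        (∏ k ∈ Icc 1 n, diagWeight₂ a z⁻¹ (w k)) * site +
      (a ^ (2:ℤ) - a ^ (-2:ℤ)) * reflectionWeight b c a z * diagWeight₁ a z (w (n + 1)) *
        telescope

end Weights

theorem simplest_wavefunction_general {K : Type*} [Field K] (a b c z : K) (ha : a ≠ 0)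
    (hz : z ≠ 0) (hz4 : z ^ 4 ≠ 1) (M : ℕ) (w : ℕ → K) (x₁ : ℕ) (hx₁ : 1 ≤ x₁) (hx₁M : x₁ ≤ M) :
    (a ^ (2:ℤ) - a ^ (-2:ℤ)) *
      (∏ k ∈ Finset.Icc (x₁ + 1) M,
        (a * z⁻¹ - a⁻¹ * z * w k) * (a * z - a⁻¹ * z⁻¹ * w k)) *
      ((b * a * z - c * a⁻¹ * z⁻¹) *
          (∏ k ∈ Finset.Icc 1 (x₁ - 1), (a * z * w k - a⁻¹ * z⁻¹)) *
          (∏ k ∈ Finset.Icc 1 x₁, (a * z - a⁻¹ * z⁻¹ * w k))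
        + (b * a⁻¹ * z⁻¹ - c * a * z) * (a * z * w x₁ - a⁻¹ * z⁻¹) *
          (∏ k ∈ Finset.Icc 1 (x₁ - 1),
            (a * z⁻¹ - a⁻¹ * z * w k) * (a * z⁻¹ * w k - a⁻¹ * z))
        + (a ^ (2:ℤ) - a ^ (-2:ℤ)) ^ 2 *
          ∑ j ∈ Finset.Icc 1 (x₁ - 1),
            w j * (b * a⁻¹ * z⁻¹ - c * a * z) *
            (∏ k ∈ Finset.Icc 1 (j - 1),
              (a * z⁻¹ - a⁻¹ * z * w k) * (a * z⁻¹ * w k - a⁻¹ * z)) *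
            (∏ k ∈ Finset.Icc (j + 1) (x₁ - 1), (a * z * w k - a⁻¹ * z⁻¹)) *
            (∏ k ∈ Finset.Icc (j + 1) x₁, (a * z - a⁻¹ * z⁻¹ * w k)))
    = (a ^ (2:ℤ) - a ^ (-2:ℤ)) * (-(a ^ (2:ℤ) * z ^ (2:ℤ)) + a ^ (-2:ℤ) * z ^ (-2:ℤ)) *
      ∑ t ∈ ({1, -1} : Finset ℤ),
        (z ^ (2 * t) - z ^ (-(2 * t)))⁻¹ * (b * a⁻¹ * z ^ (-t) - c * a * z ^ t) *
        (∏ j ∈ Finset.Icc 1 M, (a * z ^ (-t) - a⁻¹ * z ^ t * w j)) *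
        (∏ j ∈ Finset.Icc 1 (x₁ - 1), (a * z ^ (-t) * w j - a⁻¹ * z ^ t)) *
        (∏ j ∈ Finset.Icc (x₁ + 1) M, (a * z ^ t - a⁻¹ * z ^ (-t) * w j)) := by
  obtain ⟨n, rfl⟩ := Nat.exists_eq_add_of_le' hx₁
  have expansion := (eq_inv_mul_iff_mul_eq₀ (zpow_two_sub_zpow_neg_two_ne_zero hz hz4)).mpr
    (mul_wavefunctionExpansion b c ha hz w n)
  have inv_swap : (z ^ (-2:ℤ) - z ^ (2:ℤ))⁻¹ = -(z ^ (2:ℤ) - z ^ (-2:ℤ))⁻¹ := by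
    rw [← inv_neg, neg_sub]
  simp only [wavefunctionExpansion, reflectionWeight, diagWeight₁, diagWeight₂, inv_inv]
    at expansion
  rw [sum_pair (by decide)]
  simp only [add_tsub_cancel_right, mul_one, mul_neg, neg_neg, zpow_one, zpow_neg_one, inv_swap,
    ← prod_Icc_mul_prod_Icc_add_one _ (Nat.le_add_left 1 (n + 1)) hx₁M]
  rw [expansion, prod_mul_distrib]
  ring

/-- Proposition 3.2: the `N = 1` wavefunction of the `U_q(sl_2)` six-vertex model with
reflecting end, expanded into matrix elements of `B`- and `D`-operators (left-hand
side), equals its closed two-term symmetrized form (right-hand side). -/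
theorem simplest_wavefunction (a b z : ℂ) (ha : a ≠ 0) (hb : b ≠ 0) (hz : z ≠ 0)
    (hz4 : z ^ 4 ≠ 1) (M : ℕ) (w : ℕ → ℂ) (x₁ : ℕ) (hx₁ : 1 ≤ x₁) (hx₁M : x₁ ≤ M) :
    (a ^ (2:ℤ) - a ^ (-2:ℤ)) *
      (∏ k ∈ Finset.Icc (x₁ + 1) M,
        (a * z⁻¹ - a⁻¹ * z * w k) * (a * z - a⁻¹ * z⁻¹ * w k)) *
      ((b * a * z - b⁻¹ * a⁻¹ * z⁻¹) *
          (∏ k ∈ Finset.Icc 1 (x₁ - 1), (a * z * w k - a⁻¹ * z⁻¹)) *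
          (∏ k ∈ Finset.Icc 1 x₁, (a * z - a⁻¹ * z⁻¹ * w k))
        + (b * a⁻¹ * z⁻¹ - b⁻¹ * a * z) * (a * z * w x₁ - a⁻¹ * z⁻¹) *
          (∏ k ∈ Finset.Icc 1 (x₁ - 1),
            (a * z⁻¹ - a⁻¹ * z * w k) * (a * z⁻¹ * w k - a⁻¹ * z))
        + (a ^ (2:ℤ) - a ^ (-2:ℤ)) ^ 2 *
          ∑ j ∈ Finset.Icc 1 (x₁ - 1),
            w j * (b * a⁻¹ * z⁻¹ - b⁻¹ * a * z) *
            (∏ k ∈ Finset.Icc 1 (j - 1),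
              (a * z⁻¹ - a⁻¹ * z * w k) * (a * z⁻¹ * w k - a⁻¹ * z)) *
            (∏ k ∈ Finset.Icc (j + 1) (x₁ - 1), (a * z * w k - a⁻¹ * z⁻¹)) *
            (∏ k ∈ Finset.Icc (j + 1) x₁, (a * z - a⁻¹ * z⁻¹ * w k)))
    = (a ^ (2:ℤ) - a ^ (-2:ℤ)) * (-(a ^ (2:ℤ) * z ^ (2:ℤ)) + a ^ (-2:ℤ) * z ^ (-2:ℤ)) *
      ∑ t ∈ ({1, -1} : Finset ℤ),
        (z ^ (2 * t) - z ^ (-(2 * t)))⁻¹ * (b * a⁻¹ * z ^ (-t) - b⁻¹ * a * z ^ t) *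
        (∏ j ∈ Finset.Icc 1 M, (a * z ^ (-t) - a⁻¹ * z ^ t * w j)) *
        (∏ j ∈ Finset.Icc 1 (x₁ - 1), (a * z ^ (-t) * w j - a⁻¹ * z ^ t)) *
        (∏ j ∈ Finset.Icc (x₁ + 1) M, (a * z ^ t - a⁻¹ * z ^ (-t) * w j)) :=
  simplest_wavefunction_general a b b⁻¹ z ha hz hz4 M w x₁ hx₁ hx₁M
end

section
/- The function F_{M,N}(z_1,…,z_N|w_1,…,w_M|x_1,…,x_N) is symmetric with respect to z_1,…,z_N: for every permutation σ ∈ S_N, F_{M,N}(z_{σ(1)},…,z_{σ(N)}|w_1,…,w_M|x_1,…,x_N) = F_{M,N}(z_1,…,z_N|w_1,…,w_M|x_1,…,x_N). -/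
open Finset

def eps {N : ℕ} (τ : Fin N → Bool) (j : Fin N) : ℤ := if τ j then 1 else -1

noncomputable def pairFactor (a Z1 Z2 : ℂ) (t1 t2 : ℤ) : ℂ :=
  ((a ^ (2:ℤ) * Z1 ^ t1 * Z2 ^ t2 - a ^ (-2:ℤ) * Z1 ^ (-t1) * Z2 ^ (-t2)) *
   (a ^ (2:ℤ) * Z1 ^ (-t1) * Z2 ^ t2 - a ^ (-2:ℤ) * Z1 ^ t1 * Z2 ^ (-t2))) /
  ((Z1 ^ t1 * Z2 ^ t2 - Z1 ^ (-t1) * Z2 ^ (-t2)) *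
   (Z1 ^ (-t1) * Z2 ^ t2 - Z1 ^ t1 * Z2 ^ (-t2)))

/-- The symmetric function `F_{M,N}(z_1,…,z_N|w_1,…,w_M|x_1,…,x_N)`,
where `x k` for `k = 0,…,N-1` encodes `x_{k+1}`. -/
noncomputable def FF (a b : ℂ) (M N : ℕ) (z : Fin N → ℂ) (w : Fin M → ℂ) (x : ℕ → ℕ) : ℂ :=
  (a ^ (2:ℤ) - a ^ (-2:ℤ)) ^ N *
  (∏ j, (-(a ^ (2:ℤ) * z j ^ (2:ℤ)) + a ^ (-2:ℤ) * z j ^ (-2:ℤ))) *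
  ∑ σ : Equiv.Perm (Fin N), ∑ τ : Fin N → Bool,
    (∏ j, (z j ^ (2 * eps τ j) - z j ^ (-(2 * eps τ j)))⁻¹) *
    (∏ p ∈ Finset.univ.filter (fun p : Fin N × Fin N => p.1 < p.2),
      pairFactor a (z (σ p.1)) (z (σ p.2)) (eps τ (σ p.1)) (eps τ (σ p.2))) *
    (∏ k, (b * a⁻¹ * z (σ k) ^ (-(eps τ (σ k))) - b⁻¹ * a * z (σ k) ^ (eps τ (σ k)))) *
    (∏ k, ∏ j : Fin M, (a * z (σ k) ^ (-(eps τ (σ k))) - a⁻¹ * z (σ k) ^ (eps τ (σ k)) * w j)) *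
    (∏ k : Fin N, ∏ j ∈ Finset.univ.filter (fun j : Fin M => (j : ℕ) + 1 < x k.val),
      (a * z (σ k) ^ (-(eps τ (σ k))) * w j - a⁻¹ * z (σ k) ^ (eps τ (σ k)))) *
    (∏ k : Fin N, ∏ j ∈ Finset.univ.filter (fun j : Fin M => x k.val ≤ (j : ℕ)),
      (a * z (σ k) ^ (eps τ (σ k)) - a⁻¹ * z (σ k) ^ (-(eps τ (σ k))) * w j))

/-- The dual symmetric function `F̄_{M,N}(z_1,…,z_N|w_1,…,w_M|x̄_1,…,x̄_N)`. -/
noncomputable def FBar (a b : ℂ) (M N : ℕ) (z : Fin N → ℂ) (w : Fin M → ℂ) (x : ℕ → ℕ) : ℂ :=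
  (a ^ (2:ℤ) - a ^ (-2:ℤ)) ^ N *
  (∏ j, (-(a ^ (2:ℤ) * z j ^ (2:ℤ)) + a ^ (-2:ℤ) * z j ^ (-2:ℤ))) *
  ∑ σ : Equiv.Perm (Fin N), ∑ τ : Fin N → Bool,
    (∏ j, (z j ^ (2 * eps τ j) - z j ^ (-(2 * eps τ j)))⁻¹) *
    (∏ p ∈ Finset.univ.filter (fun p : Fin N × Fin N => p.1 < p.2),
      pairFactor a (z (σ p.1)) (z (σ p.2)) (eps τ (σ p.1)) (eps τ (σ p.2))) *
    (∏ k, (b * a * z (σ k) ^ (eps τ (σ k)) - b⁻¹ * a⁻¹ * z (σ k) ^ (-(eps τ (σ k))))) *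
    (∏ k, ∏ j : Fin M, (a * z (σ k) ^ (-(eps τ (σ k))) * w j - a⁻¹ * z (σ k) ^ (eps τ (σ k)))) *
    (∏ k : Fin N, ∏ j ∈ Finset.univ.filter (fun j : Fin M => (j : ℕ) + 1 < x k.val),
      (a * z (σ k) ^ (-(eps τ (σ k))) - a⁻¹ * z (σ k) ^ (eps τ (σ k)) * w j)) *
    (∏ k : Fin N, ∏ j ∈ Finset.univ.filter (fun j : Fin M => x k.val ≤ (j : ℕ)),
      (a * z (σ k) ^ (eps τ (σ k)) * w j - a⁻¹ * z (σ k) ^ (-(eps τ (σ k)))))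

/-- `xfun T k` is the `(k+1)`-st smallest element of `T`, in 1-based labelling. -/
def xfun {M : ℕ} (T : Finset (Fin M)) (k : ℕ) : ℕ :=
  ((T.sort (· ≤ ·)).map (fun j : Fin M => (j : ℕ) + 1)).getD k 0

/-!
Each summand of `F_{M,N}` is one fixed function of the permuted pairs `(z_{σ(k)}, τ_{σ(k)})`: the
only factor not written through `σ` is a product over all indices, hence may be reindexed by `σ`.
Since `τ ∘ σ` runs over all sign vectors when `τ` does, `F_{M,N}` is a symmetric prefactor times
a sum over `S_N` of a single function of `z ∘ σ`, and such a sum is symmetric.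
-/

section Symmetrization

variable {ι α R : Type*} [Fintype ι] [DecidableEq ι] [AddCommMonoid R]

/-- The symmetrization of a function `f` of a family of arguments: the sum of `f` over all
permutations of the family, without the normalization by `(card ι)!`. -/
def symmetrization (f : (ι → α) → R) (z : ι → α) : R :=
  ∑ σ : Equiv.Perm ι, f (z ∘ σ)

theorem symmetrization_comp_perm (f : (ι → α) → R) (z : ι → α) (σ₀ : Equiv.Perm ι) :
    symmetrization f (z ∘ σ₀) = symmetrization f z :=
  Equiv.sum_comp (Equiv.mulLeft σ₀) fun σ : Equiv.Perm ι => f (z ∘ σ)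

theorem sum_comp_perm [Fintype α] (f : (ι → α) → R) (σ : Equiv.Perm ι) :
    ∑ τ : ι → α, f (τ ∘ σ) = ∑ τ, f τ :=
  Equiv.sum_comp (Equiv.arrowCongr σ.symm (Equiv.refl α)) f

end Symmetrization

section Factorization

variable {M N : ℕ}

/-- The factor of `F_{M,N}` standing in front of the sum over permutations and signs. -/
noncomputable def FFPrefactor (a : ℂ) (z : Fin N → ℂ) : ℂ :=
  (a ^ (2:ℤ) - a ^ (-2:ℤ)) ^ N *
  ∏ j, (-(a ^ (2:ℤ) * z j ^ (2:ℤ)) + a ^ (-2:ℤ) * z j ^ (-2:ℤ))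

/-- The summand of `F_{M,N}` at the identity permutation and the sign vector `τ`, as a function of
the spectral parameters `z`. -/
noncomputable def FFSummand (a b : ℂ) (w : Fin M → ℂ) (x : ℕ → ℕ) (z : Fin N → ℂ)
    (τ : Fin N → Bool) : ℂ :=
  (∏ k, (z k ^ (2 * eps τ k) - z k ^ (-(2 * eps τ k)))⁻¹) *
  (∏ p ∈ Finset.univ.filter (fun p : Fin N × Fin N => p.1 < p.2),
    pairFactor a (z p.1) (z p.2) (eps τ p.1) (eps τ p.2)) *
  (∏ k, (b * a⁻¹ * z k ^ (-(eps τ k)) - b⁻¹ * a * z k ^ (eps τ k))) *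
  (∏ k, ∏ j : Fin M, (a * z k ^ (-(eps τ k)) - a⁻¹ * z k ^ (eps τ k) * w j)) *
  (∏ k : Fin N, ∏ j ∈ Finset.univ.filter (fun j : Fin M => (j : ℕ) + 1 < x k.val),
    (a * z k ^ (-(eps τ k)) * w j - a⁻¹ * z k ^ (eps τ k))) *
  (∏ k : Fin N, ∏ j ∈ Finset.univ.filter (fun j : Fin M => x k.val ≤ (j : ℕ)),
    (a * z k ^ (eps τ k) - a⁻¹ * z k ^ (-(eps τ k)) * w j))

theorem FFPrefactor_comp_perm (a : ℂ) (z : Fin N → ℂ) (σ₀ : Equiv.Perm (Fin N)) :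
    FFPrefactor a (z ∘ σ₀) = FFPrefactor a z :=
  congrArg ((a ^ (2:ℤ) - a ^ (-2:ℤ)) ^ N * ·) <|
    Equiv.prod_comp σ₀ fun j => -(a ^ (2:ℤ) * z j ^ (2:ℤ)) + a ^ (-2:ℤ) * z j ^ (-2:ℤ)

theorem prod_inv_zpow_sub_comp_perm (z : Fin N → ℂ) (τ : Fin N → Bool)
    (σ : Equiv.Perm (Fin N)) :
    ∏ k, ((z ∘ σ) k ^ (2 * eps (τ ∘ σ) k) - (z ∘ σ) k ^ (-(2 * eps (τ ∘ σ) k)))⁻¹ =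
      ∏ j, (z j ^ (2 * eps τ j) - z j ^ (-(2 * eps τ j)))⁻¹ :=
  Equiv.prod_comp σ fun j => (z j ^ (2 * eps τ j) - z j ^ (-(2 * eps τ j)))⁻¹

theorem FF_eq_prefactor_mul_sum_sum (a b : ℂ) (z : Fin N → ℂ) (w : Fin M → ℂ) (x : ℕ → ℕ) :
    FF a b M N z w x =
      FFPrefactor a z *
        ∑ σ : Equiv.Perm (Fin N), ∑ τ : Fin N → Bool, FFSummand a b w x (z ∘ σ) (τ ∘ σ) := by
  simp only [FFSummand, prod_inv_zpow_sub_comp_perm]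
  rfl

theorem FF_eq_prefactor_mul_symmetrization (a b : ℂ) (z : Fin N → ℂ) (w : Fin M → ℂ)
    (x : ℕ → ℕ) :
    FF a b M N z w x =
      FFPrefactor a z * symmetrization (fun y => ∑ τ, FFSummand a b w x y τ) z := by
  simp only [FF_eq_prefactor_mul_sum_sum, sum_comp_perm, symmetrization]

end Factorization

theorem F_symmetric_general (a b : ℂ) (M N : ℕ) (z : Fin N → ℂ) (w : Fin M → ℂ) (x : ℕ → ℕ)
    (ha : a ≠ 0) (hb : b ≠ 0) (hz : ∀ j, z j ≠ 0) (hz4 : ∀ j, z j ^ 4 ≠ 1)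
    (hzz : ∀ j k, j ≠ k → z j ^ 2 * z k ^ 2 ≠ 1)
    (hzz' : ∀ j k, j ≠ k → z j ^ 2 ≠ z k ^ 2)
    (σ₀ : Equiv.Perm (Fin N)) :
    FF a b M N (z ∘ σ₀) w x = FF a b M N z w x := by
  simp only [FF_eq_prefactor_mul_symmetrization, FFPrefactor_comp_perm, symmetrization_comp_perm]

/-- Property (2): the symmetric function `F_{M,N}` is symmetric in `z_1,…,z_N`. -/
theorem F_symmetric (a b : ℂ) (M N : ℕ) (z : Fin N → ℂ) (w : Fin M → ℂ) (x : ℕ → ℕ)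
    (ha : a ≠ 0) (hb : b ≠ 0) (hz : ∀ j, z j ≠ 0) (hz4 : ∀ j, z j ^ 4 ≠ 1)
    (hzz : ∀ j k, j ≠ k → z j ^ 2 * z k ^ 2 ≠ 1)
    (hzz' : ∀ j k, j ≠ k → z j ^ 2 ≠ z k ^ 2)
    (hx1 : ∀ k : Fin N, 1 ≤ x k.val) (hxM : ∀ k : Fin N, x k.val ≤ M)
    (hmono : ∀ j k : Fin N, j < k → x j.val < x k.val)
    (σ₀ : Equiv.Perm (Fin N)) :
    FF a b M N (z ∘ σ₀) w x = FF a b M N z w x := by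
  exact F_symmetric_general a b M N z w x ha hb hz hz4 hzz hzz' σ₀
end

section
/- The function F̄_{M,N}(z_1,…,z_N|w_1,…,w_M|x̄_1,…,x̄_N) is symmetric with respect to z_1,…,z_N: for every permutation σ ∈ S_N, F̄_{M,N}(z_{σ(1)},…,z_{σ(N)}|w_1,…,w_M|x̄_1,…,x̄_N) = F̄_{M,N}(z_1,…,z_N|w_1,…,w_M|x̄_1,…,x̄_N). -/
open Finset

/-- The sign-summand of `FBar` at `σ = 1`, with the variables `y` in their given order and the sign
`eps τ k` attached to the position `k`. -/
noncomputable def FBarSignTerm (a b : ℂ) {M N : ℕ} (w : Fin M → ℂ) (x : ℕ → ℕ)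
    (y : Fin N → ℂ) (τ : Fin N → Bool) : ℂ :=
  (∏ k, (y k ^ (2 * eps τ k) - y k ^ (-(2 * eps τ k)))⁻¹) *
  (∏ p ∈ univ.filter (fun p : Fin N × Fin N => p.1 < p.2),
    pairFactor a (y p.1) (y p.2) (eps τ p.1) (eps τ p.2)) *
  (∏ k, (b * a * y k ^ (eps τ k) - b⁻¹ * a⁻¹ * y k ^ (-(eps τ k)))) *
  (∏ k, ∏ j : Fin M, (a * y k ^ (-(eps τ k)) * w j - a⁻¹ * y k ^ (eps τ k))) *
  (∏ k : Fin N, ∏ j ∈ univ.filter (fun j : Fin M => (j : ℕ) + 1 < x k.val),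
    (a * y k ^ (-(eps τ k)) - a⁻¹ * y k ^ (eps τ k) * w j)) *
  (∏ k : Fin N, ∏ j ∈ univ.filter (fun j : Fin M => x k.val ≤ (j : ℕ)),
    (a * y k ^ (eps τ k) * w j - a⁻¹ * y k ^ (-(eps τ k))))

/-- The function of the ordered variables `y` whose symmetrization over `S_N` is `FBar`. -/
noncomputable def FBarSeed (a b : ℂ) {M N : ℕ} (w : Fin M → ℂ) (x : ℕ → ℕ) (y : Fin N → ℂ) : ℂ :=
  (a ^ (2:ℤ) - a ^ (-2:ℤ)) ^ N *
  (∏ k, (-(a ^ (2:ℤ) * y k ^ (2:ℤ)) + a ^ (-2:ℤ) * y k ^ (-2:ℤ))) *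
  ∑ τ : Fin N → Bool, FBarSignTerm a b w x y τ

section Symmetrization

variable {ι α R : Type*} [Fintype ι] [DecidableEq ι] [AddCommMonoid R]

theorem sum_perm_comp_comp (g : (ι → α) → R) (z : ι → α) (π : Equiv.Perm ι) :
    ∑ σ : Equiv.Perm ι, g ((z ∘ π) ∘ σ) = ∑ σ : Equiv.Perm ι, g (z ∘ σ) :=
  Equiv.sum_comp (Equiv.mulLeft π) fun σ => g (z ∘ σ)

theorem sum_pi_comp_perm [Fintype α] (g : (ι → α) → R) (σ : Equiv.Perm ι) :
    ∑ τ : ι → α, g (τ ∘ σ) = ∑ τ : ι → α, g τ :=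
  Equiv.sum_comp (σ.symm.arrowCongr (Equiv.refl α)) g

end Symmetrization

theorem FBarSignTerm_comp_perm (a b : ℂ) {M N : ℕ} (w : Fin M → ℂ) (x : ℕ → ℕ)
    (z : Fin N → ℂ) (τ : Fin N → Bool) (σ : Equiv.Perm (Fin N)) :
    FBarSignTerm a b w x (z ∘ σ) (τ ∘ σ) =
      (∏ j, (z j ^ (2 * eps τ j) - z j ^ (-(2 * eps τ j)))⁻¹) *
      (∏ p ∈ univ.filter (fun p : Fin N × Fin N => p.1 < p.2),
        pairFactor a (z (σ p.1)) (z (σ p.2)) (eps τ (σ p.1)) (eps τ (σ p.2))) *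
      (∏ k, (b * a * z (σ k) ^ (eps τ (σ k)) - b⁻¹ * a⁻¹ * z (σ k) ^ (-(eps τ (σ k))))) *
      (∏ k, ∏ j : Fin M,
        (a * z (σ k) ^ (-(eps τ (σ k))) * w j - a⁻¹ * z (σ k) ^ (eps τ (σ k)))) *
      (∏ k : Fin N, ∏ j ∈ univ.filter (fun j : Fin M => (j : ℕ) + 1 < x k.val),
        (a * z (σ k) ^ (-(eps τ (σ k))) - a⁻¹ * z (σ k) ^ (eps τ (σ k)) * w j)) *
      (∏ k : Fin N, ∏ j ∈ univ.filter (fun j : Fin M => x k.val ≤ (j : ℕ)),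
        (a * z (σ k) ^ (eps τ (σ k)) * w j - a⁻¹ * z (σ k) ^ (-(eps τ (σ k))))) := by
  rw [← Equiv.prod_comp σ fun j => (z j ^ (2 * eps τ j) - z j ^ (-(2 * eps τ j)))⁻¹]
  rfl

theorem FBar_eq_sum_perm_FBarSeed (a b : ℂ) {M N : ℕ} (z : Fin N → ℂ) (w : Fin M → ℂ)
    (x : ℕ → ℕ) :
    FBar a b M N z w x = ∑ σ : Equiv.Perm (Fin N), FBarSeed a b w x (z ∘ σ) := by
  simp only [FBar, mul_sum (s := (univ : Finset (Equiv.Perm (Fin N))))]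
  refine sum_congr rfl fun σ _ => ?_
  have prefactor_eq :
      ∏ j, (-(a ^ (2:ℤ) * z j ^ (2:ℤ)) + a ^ (-2:ℤ) * z j ^ (-2:ℤ)) =
        ∏ k, (-(a ^ (2:ℤ) * (z ∘ σ) k ^ (2:ℤ)) + a ^ (-2:ℤ) * (z ∘ σ) k ^ (-2:ℤ)) :=
    (Equiv.prod_comp σ _).symm
  -- Summing over all signs, they may be attached to the positions `k` instead of the labels `σ k`.
  simp only [FBarSeed, ← sum_pi_comp_perm (FBarSignTerm a b w x (z ∘ σ)) σ,
    FBarSignTerm_comp_perm, prefactor_eq]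

theorem FBar_symmetric_general (a b : ℂ) (M N : ℕ) (z : Fin N → ℂ) (w : Fin M → ℂ) (x : ℕ → ℕ)
    (_ha : a ≠ 0) (_hb : b ≠ 0) (_hz : ∀ j, z j ≠ 0) (_hz4 : ∀ j, z j ^ 4 ≠ 1)
    (_hzz : ∀ j k, j ≠ k → z j ^ 2 * z k ^ 2 ≠ 1)
    (_hzz' : ∀ j k, j ≠ k → z j ^ 2 ≠ z k ^ 2)
    (σ₀ : Equiv.Perm (Fin N)) :
    FBar a b M N (z ∘ σ₀) w x = FBar a b M N z w x := by
  simp only [FBar_eq_sum_perm_FBarSeed]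
  exact sum_perm_comp_comp (FBarSeed a b w x) z σ₀

/-- Property (2) for the dual: the symmetric function `F̄_{M,N}` is symmetric in
`z_1,…,z_N`. -/
theorem FBar_symmetric (a b : ℂ) (M N : ℕ) (z : Fin N → ℂ) (w : Fin M → ℂ) (x : ℕ → ℕ)
    (ha : a ≠ 0) (hb : b ≠ 0) (hz : ∀ j, z j ≠ 0) (hz4 : ∀ j, z j ^ 4 ≠ 1)
    (hzz : ∀ j k, j ≠ k → z j ^ 2 * z k ^ 2 ≠ 1)
    (hzz' : ∀ j k, j ≠ k → z j ^ 2 ≠ z k ^ 2)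
    (hx1 : ∀ k : Fin N, 1 ≤ x k.val) (hxM : ∀ k : Fin N, x k.val ≤ M)
    (hmono : ∀ j k : Fin N, j < k → x j.val < x k.val)
    (σ₀ : Equiv.Perm (Fin N)) :
    FBar a b M N (z ∘ σ₀) w x = FBar a b M N z w x :=
  FBar_symmetric_general a b M N z w x ha hb hz hz4 hzz hzz' σ₀
end

section
/- For each i ∈ {1,…,N}, replacing z_i by z_i⁻¹ in F_{M,N} changes its value by the factor (a²z_i⁻²−a⁻²z_i²)/(a²z_i²−a⁻²z_i⁻²); equivalently, (a²z_i²−a⁻²z_i⁻²) · F_{M,N}(z_1,…,z_i⁻¹,…,z_N|w_1,…,w_M|x_1,…,x_N) = (a²z_i⁻²−a⁻²z_i²) · F_{M,N}(z_1,…,z_i,…,z_N|w_1,…,w_M|x_1,…,x_N). -/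
/-!
Writing `u_j = z_j ^ τ_j`, every summand of `F` depends on `z` and `τ` only through `u`.
Inverting `z_i` and flipping the sign `τ_i` leaves `u` unchanged, so the inversion only permutes
the sum over signs. What changes is the factor `-a²z_i² + a⁻²z_i⁻²` of the prefactor.
-/

open Finset

/-- The tuple `(z_1 ^ τ_1, …, z_N ^ τ_N)` of spectral variables with the signs `τ` applied. -/
def signedVars {G : Type*} [DivisionMonoid G] {N : ℕ} (z : Fin N → G) (τ : Fin N → Bool) :
    Fin N → G :=
  fun j => z j ^ eps τ j

/-- The sign vector `τ` with its `i`-th sign reversed; `true` encodes `+1`, as in `eps`. -/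
def flipSign {N : ℕ} (i : Fin N) (τ : Fin N → Bool) : Fin N → Bool :=
  Function.update τ i (!(τ i))

/-- The summand of `FF` attached to the permutation `σ`, as a function of the signed variables
`u_j = z_j ^ τ_j`. The exponents `1` of `pairFactor` reflect that the signs are absorbed in `u`. -/
noncomputable def signedSummand (a b : ℂ) {M N : ℕ} (w : Fin M → ℂ) (x : ℕ → ℕ)
    (σ : Equiv.Perm (Fin N)) (u : Fin N → ℂ) : ℂ :=
  (∏ j, (u j ^ (2 : ℤ) - u j ^ (-2 : ℤ))⁻¹) *
  (∏ p : Fin N × Fin N with p.1 < p.2, pairFactor a (u (σ p.1)) (u (σ p.2)) 1 1) *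
  (∏ k, (b * a⁻¹ * (u (σ k))⁻¹ - b⁻¹ * a * u (σ k))) *
  (∏ k, ∏ j, (a * (u (σ k))⁻¹ - a⁻¹ * u (σ k) * w j)) *
  (∏ k : Fin N, ∏ j ∈ univ.filter fun j : Fin M => (j : ℕ) + 1 < x k,
    (a * (u (σ k))⁻¹ * w j - a⁻¹ * u (σ k))) *
  (∏ k : Fin N, ∏ j ∈ univ.filter fun j : Fin M => x k ≤ (j : ℕ),
    (a * u (σ k) - a⁻¹ * (u (σ k))⁻¹ * w j))

theorem mul_prod_comp_update {ι α R : Type*} [Fintype ι] [DecidableEq ι] [CommMonoid R]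
    (g : α → R) (z : ι → α) (i : ι) (y : α) :
    g (z i) * ∏ j, g (Function.update z i y j) = g y * ∏ j, g (z j) := by
  have h_update : ∏ j, g (Function.update z i y j) = g y * ∏ j ∈ univ \ {i}, g (z j) := by
    simp only [Function.apply_update (fun _ => g), prod_update_of_mem (mem_univ i)]
  rw [h_update, mul_left_comm, sdiff_singleton_eq_erase,
    mul_prod_erase univ (fun j => g (z j)) (mem_univ i)]

theorem flipSign_involutive {N : ℕ} (i : Fin N) : Function.Involutive (flipSign i) := by
  intro τ
  simp [flipSign]

theorem eps_flipSign_self {N : ℕ} (i : Fin N) (τ : Fin N → Bool) :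
    eps (flipSign i τ) i = -eps τ i := by
  cases h : τ i <;> simp [eps, flipSign, h]

theorem eps_flipSign_of_ne {N : ℕ} {i j : Fin N} (hji : j ≠ i) (τ : Fin N → Bool) :
    eps (flipSign i τ) j = eps τ j := by
  simp [eps, flipSign, hji]

section SignedVars

variable {G : Type*} [DivisionMonoid G] {N : ℕ} (z : Fin N → G) (i : Fin N)

theorem signedVars_update_inv_flipSign (τ : Fin N → Bool) :
    signedVars (Function.update z i (z i)⁻¹) (flipSign i τ) = signedVars z τ := by
  ext j
  rcases eq_or_ne j i with rfl | hji
  · simp [signedVars, eps_flipSign_self]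
  · simp [signedVars, eps_flipSign_of_ne hji, hji]

theorem sum_signedVars_update_inv {A : Type*} [AddCommMonoid A] (f : (Fin N → G) → A) :
    ∑ τ, f (signedVars (Function.update z i (z i)⁻¹) τ) = ∑ τ, f (signedVars z τ) := by
  rw [← Equiv.sum_comp (flipSign_involutive i).toPerm]
  simp only [Function.Involutive.coe_toPerm, signedVars_update_inv_flipSign]

end SignedVars

theorem pairFactor_zpow (a Z₁ Z₂ : ℂ) (s₁ s₂ t₁ t₂ : ℤ) :
    pairFactor a (Z₁ ^ s₁) (Z₂ ^ s₂) t₁ t₂ = pairFactor a Z₁ Z₂ (s₁ * t₁) (s₂ * t₂) := by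
  simp only [pairFactor, ← zpow_mul, mul_neg]

theorem FF_eq_sum_signedSummand (a b : ℂ) (M N : ℕ) (z : Fin N → ℂ) (w : Fin M → ℂ)
    (x : ℕ → ℕ) :
    FF a b M N z w x =
      (a ^ (2 : ℤ) - a ^ (-2 : ℤ)) ^ N *
      (∏ j, (-(a ^ (2 : ℤ) * z j ^ (2 : ℤ)) + a ^ (-2 : ℤ) * z j ^ (-2 : ℤ))) *
      ∑ σ, ∑ τ, signedSummand a b w x σ (signedVars z τ) := by
  simp only [FF, signedSummand, signedVars, pairFactor_zpow, mul_one, ← zpow_mul, ← zpow_neg,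
    mul_neg, mul_comm (2 : ℤ)]

theorem F_inversion_general (a b : ℂ) (M N : ℕ) (z : Fin N → ℂ) (w : Fin M → ℂ) (x : ℕ → ℕ)
    (_ha : a ≠ 0) (_hb : b ≠ 0) (_hz : ∀ j, z j ≠ 0) (_hz4 : ∀ j, z j ^ 4 ≠ 1)
    (_hzz : ∀ j k, j ≠ k → z j ^ 2 * z k ^ 2 ≠ 1)
    (_hzz' : ∀ j k, j ≠ k → z j ^ 2 ≠ z k ^ 2) (i : Fin N) :
    (a ^ (2 : ℤ) * z i ^ (2 : ℤ) - a ^ (-2 : ℤ) * z i ^ (-2 : ℤ)) *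
      FF a b M N (Function.update z i (z i)⁻¹) w x
    = (a ^ (2 : ℤ) * z i ^ (-2 : ℤ) - a ^ (-2 : ℤ) * z i ^ (2 : ℤ)) * FF a b M N z w x := by
  have h_prefactor := mul_prod_comp_update
    (fun u : ℂ => -(a ^ (2 : ℤ) * u ^ (2 : ℤ)) + a ^ (-2 : ℤ) * u ^ (-2 : ℤ)) z i (z i)⁻¹
  simp only [inv_zpow', neg_neg] at h_prefactor
  simp only [FF_eq_sum_signedSummand, sum_signedVars_update_inv]
  linear_combination (-(a ^ (2 : ℤ) - a ^ (-2 : ℤ)) ^ N *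
    ∑ σ, ∑ τ, signedSummand a b w x σ (signedVars z τ)) * h_prefactor

/-- Property (3): replacing `z_i` by `z_i⁻¹` in `F_{M,N}` changes its value by the
factor `(a²z_i⁻²−a⁻²z_i²)/(a²z_i²−a⁻²z_i⁻²)`. -/
theorem F_inversion (a b : ℂ) (M N : ℕ) (z : Fin N → ℂ) (w : Fin M → ℂ) (x : ℕ → ℕ)
    (ha : a ≠ 0) (hb : b ≠ 0) (hz : ∀ j, z j ≠ 0) (hz4 : ∀ j, z j ^ 4 ≠ 1)
    (hzz : ∀ j k, j ≠ k → z j ^ 2 * z k ^ 2 ≠ 1)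
    (hzz' : ∀ j k, j ≠ k → z j ^ 2 ≠ z k ^ 2)
    (hx1 : ∀ k : Fin N, 1 ≤ x k.val) (hxM : ∀ k : Fin N, x k.val ≤ M)
    (hmono : ∀ j k : Fin N, j < k → x j.val < x k.val)
    (i : Fin N) :
    (a ^ (2:ℤ) * z i ^ (2:ℤ) - a ^ (-2:ℤ) * z i ^ (-2:ℤ)) *
      FF a b M N (Function.update z i (z i)⁻¹) w x
    = (a ^ (2:ℤ) * z i ^ (-2:ℤ) - a ^ (-2:ℤ) * z i ^ (2:ℤ)) * FF a b M N z w x :=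
  F_inversion_general a b M N z w x ha hb hz hz4 hzz hzz' i
end

section
/- Suppose x_N = M. Then, viewed as a function of the single variable w_M (with all other arguments fixed), F_{M,N}(z_1,…,z_N|w_1,…,w_M|x_1,…,x_N) is a polynomial in w_M of degree at most 2N−1. -/
open Finset

/-!
In the factors attached to a fixed `k` in a summand of `F`, the variable `w_l` occurs affinely once
in the product over all sites, and affinely once more in the products over the sites `j < x_k` and
`j > x_k`, unless `x_k = l`. A summand thus has degree at most `2N - #{k | x_k = l}` in `w_l`, and
everything else in it is constant. Sites are numbered from 1 here and in the values of `x`, so an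
index `l : Fin M` stands for the site `l + 1`.
-/

open Polynomial

/-- `f` is the function of a polynomial of degree at most `d`. Stating this for functions rather
than polynomials lets it apply directly to expressions such as `FF`, which are only defined on
values. -/
def IsPolynomialOfDegreeLE {R : Type*} [CommSemiring R] (d : ℕ) (f : R → R) : Prop :=
  ∃ p : R[X], p.natDegree ≤ d ∧ ∀ u, f u = p.eval u

namespace IsPolynomialOfDegreeLE

section CommSemiring

variable {R ι κ : Type*} [CommSemiring R]

theorem const (c : R) : IsPolynomialOfDegreeLE 0 fun _ => c :=
  ⟨C c, by simp, by simp⟩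

theorem mul {d e : ℕ} {f g : R → R} (hf : IsPolynomialOfDegreeLE d f)
    (hg : IsPolynomialOfDegreeLE e g) : IsPolynomialOfDegreeLE (d + e) fun u => f u * g u := by
  obtain ⟨p, hp, hfp⟩ := hf
  obtain ⟨q, hq, hgq⟩ := hg
  exact ⟨p * q, natDegree_mul_le_of_le hp hq, fun u => by simp [hfp, hgq]⟩

theorem const_mul {d : ℕ} {f : R → R} (c : R) (hf : IsPolynomialOfDegreeLE d f) :
    IsPolynomialOfDegreeLE d fun u => c * f u := by
  simpa using (const c).mul hf

theorem sum (s : Finset ι) {d : ℕ} {f : ι → R → R}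
    (hf : ∀ i ∈ s, IsPolynomialOfDegreeLE d (f i)) :
    IsPolynomialOfDegreeLE d fun u => ∑ i ∈ s, f i u := by
  choose! p hp hfp using hf
  refine ⟨∑ i ∈ s, p i, natDegree_sum_le_of_forall_le s p hp, fun u => ?_⟩
  rw [eval_finsetSum]
  exact sum_congr rfl fun i hi => hfp i hi u

theorem prod (s : Finset ι) {d : ι → ℕ} {f : ι → R → R}
    (hf : ∀ i ∈ s, IsPolynomialOfDegreeLE (d i) (f i)) :
    IsPolynomialOfDegreeLE (∑ i ∈ s, d i) fun u => ∏ i ∈ s, f i u := by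
  choose! p hp hfp using hf
  refine ⟨∏ i ∈ s, p i, (natDegree_prod_le s p).trans (sum_le_sum hp), fun u => ?_⟩
  rw [eval_prod]
  exact prod_congr rfl fun i hi => hfp i hi u

variable [DecidableEq ι]

theorem prod_update {d : ℕ} {f : R → R} (hf : IsPolynomialOfDegreeLE d f) (s : Finset ι)
    (w : ι → R) (l : ι) :
    IsPolynomialOfDegreeLE (if l ∈ s then d else 0)
      fun u => ∏ j ∈ s, f (Function.update w l u j) := by
  have prod_away (t : Finset ι) (hl : l ∉ t) (u : R) :
      ∏ j ∈ t, f (Function.update w l u j) = ∏ j ∈ t, f (w j) :=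
    prod_congr rfl fun j hj => by rw [Function.update_of_ne (ne_of_mem_of_not_mem hj hl)]
  split_ifs with hl
  · simpa [← mul_prod_erase s _ hl, prod_away, mul_comm] using
      hf.const_mul (∏ j ∈ s.erase l, f (w j))
  · simpa only [prod_away s hl] using const (∏ j ∈ s, f (w j))

theorem prod_prod_update [Fintype κ] {f : κ → R → R}
    (hf : ∀ k, IsPolynomialOfDegreeLE 1 (f k)) (s : κ → Finset ι) (w : ι → R) (l : ι) :
    IsPolynomialOfDegreeLE #{k | l ∈ s k}
      fun u => ∏ k, ∏ j ∈ s k, f k (Function.update w l u j) := by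
  rw [card_filter]
  exact prod univ fun k _ => (hf k).prod_update (s k) w l

end CommSemiring

section CommRing

variable {R : Type*} [CommRing R]

theorem const_sub_const_mul (c e : R) : IsPolynomialOfDegreeLE 1 fun u => c - e * u :=
  ⟨C c - C e * X, by compute_degree, by simp⟩

theorem const_mul_sub_const (c e : R) : IsPolynomialOfDegreeLE 1 fun u => c * u - e :=
  ⟨C c * X - C e, by compute_degree, by simp⟩

end CommRing

end IsPolynomialOfDegreeLE

theorem card_filter_lt_add_card_filter_eq_add_card_filter_gt {ι α : Type*} [Fintype ι]
    [LinearOrder α] (x : ι → α) (y : α) :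
    #{k | x k < y} + #{k | x k = y} + #{k | y < x k} = Fintype.card ι := by
  simp only [card_filter, ← sum_add_distrib]
  rw [Fintype.card_eq_sum_ones]
  refine sum_congr rfl fun k _ => ?_
  obtain h | h | h := lt_trichotomy (x k) y
  · simp [h, h.ne, h.not_gt]
  · simp [h]
  · simp [h, h.ne', h.not_gt]

open IsPolynomialOfDegreeLE in
/-- The shape of a summand of `FF`, with everything but its dependence on `w` made arbitrary. -/
theorem isPolynomialOfDegreeLE_summand {R κ : Type*} [CommRing R] [Fintype κ] {M : ℕ}
    (c₀ : R) (c₁ e₁ c₂ e₂ c₃ e₃ : κ → R) (w : Fin M → R) (x : κ → ℕ) (l : Fin M) :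
    IsPolynomialOfDegreeLE (2 * Fintype.card κ - #{k | x k = (l : ℕ) + 1}) fun u =>
      c₀ * (∏ k, ∏ j, (c₁ k - e₁ k * Function.update w l u j)) *
        (∏ k, ∏ j ∈ {j : Fin M | (j : ℕ) + 1 < x k}, (c₂ k * Function.update w l u j - e₂ k)) *
        (∏ k, ∏ j ∈ {j : Fin M | x k ≤ (j : ℕ)}, (c₃ k - e₃ k * Function.update w l u j)) := by
  have all_sites := prod_prod_update (fun k => const_sub_const_mul (c₁ k) (e₁ k))
    (fun _ => univ) w l
  have left_sites := prod_prod_update (fun k => const_mul_sub_const (c₂ k) (e₂ k))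
    (fun k => {j : Fin M | (j : ℕ) + 1 < x k}) w l
  have right_sites := prod_prod_update (fun k => const_sub_const_mul (c₃ k) (e₃ k))
    (fun k => {j : Fin M | x k ≤ (j : ℕ)}) w l
  have count := card_filter_lt_add_card_filter_eq_add_card_filter_gt x (l + 1)
  convert ((all_sites.const_mul c₀).mul left_sites).mul right_sites using 1
  simp only [mem_univ, mem_filter, true_and, filter_true, card_univ,
    Order.lt_add_one_iff] at count ⊢
  omega

theorem F_polynomial_in_wM_general (a b : ℂ) (M N : ℕ) (z : Fin N → ℂ) (w : Fin M → ℂ) (x : ℕ → ℕ)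
    (_ha : a ≠ 0) (_hb : b ≠ 0) (_hz : ∀ j, z j ≠ 0) (_hz4 : ∀ j, z j ^ 4 ≠ 1)
    (_hzz : ∀ j k, j ≠ k → z j ^ 2 * z k ^ 2 ≠ 1)
    (_hzz' : ∀ j k, j ≠ k → z j ^ 2 ≠ z k ^ 2) (l : Fin M) :
    ∃ p : ℂ[X], p.degree ≤ ((2 * N - #{k : Fin N | x k = l + 1} : ℕ) : WithBot ℕ) ∧
      ∀ u : ℂ, FF a b M N z (Function.update w l u) x = p.eval u := by
  have poly : IsPolynomialOfDegreeLE (2 * N - #{k : Fin N | x k = l + 1}) fun u =>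
      FF a b M N z (Function.update w l u) x := by
    unfold FF
    refine .const_mul _ (.sum _ fun σ _ => .sum _ fun τ _ => ?_)
    simpa only [Fintype.card_fin] using
      isPolynomialOfDegreeLE_summand _ _ _ _ _ _ _ w (fun k : Fin N => x k) l
  obtain ⟨p, hp, hFp⟩ := poly
  exact ⟨p, degree_le_of_natDegree_le hp, hFp⟩

/-- Property (1): when `x_N = M`, the symmetric function `F_{M,N}`, viewed as a function
of `w_M` alone, is a polynomial in `w_M` of degree at most `2N−1`. -/
theorem F_polynomial_in_wM (a b : ℂ) (M N : ℕ) (hM : 0 < M) (hN : 0 < N)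
    (z : Fin N → ℂ) (w : Fin M → ℂ) (x : ℕ → ℕ)
    (ha : a ≠ 0) (hb : b ≠ 0) (hz : ∀ j, z j ≠ 0) (hz4 : ∀ j, z j ^ 4 ≠ 1)
    (hzz : ∀ j k, j ≠ k → z j ^ 2 * z k ^ 2 ≠ 1)
    (hzz' : ∀ j k, j ≠ k → z j ^ 2 ≠ z k ^ 2)
    (hx1 : ∀ k : Fin N, 1 ≤ x k.val) (hxM : ∀ k : Fin N, x k.val ≤ M)
    (hmono : ∀ j k : Fin N, j < k → x j.val < x k.val)
    (hlast : x (N - 1) = M) :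
    ∃ p : Polynomial ℂ, p.degree ≤ ((2 * N - 1 : ℕ) : WithBot ℕ) ∧
      ∀ u : ℂ,
        FF a b M N z (Function.update w ⟨M - 1, Nat.sub_lt hM Nat.one_pos⟩ u) x
          = p.eval u := by
  obtain ⟨p, hp, hFp⟩ := F_polynomial_in_wM_general a b M N z w x ha hb hz hz4 hzz hzz'
    ⟨M - 1, by omega⟩
  have last_mem : 1 ≤ #{k : Fin N | x k = M - 1 + 1} :=
    card_pos.mpr ⟨⟨N - 1, by omega⟩, by simp [hlast, Nat.sub_add_cancel hM]⟩
  exact ⟨p, hp.trans (by gcongr), hFp⟩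
end

section
/- Suppose x_N = M. Then, setting w_M = a²z_N², the following recursion holds: F_{M,N}(z_1,…,z_N|w_1,…,w_{M−1},a²z_N²|x_1,…,x_N) = (a²−a⁻²)(ba⁻¹z_N⁻¹−b⁻¹az_N) ∏_{j=1}^{N}(a³z_N²z_j−a⁻¹z_j⁻¹) ∏_{j=1}^{N−1}(a³z_N²z_j⁻¹−a⁻¹z_j) ∏_{j=1}^{M−1}(az_N⁻¹w_j−a⁻¹z_N)(az_N⁻¹−a⁻¹z_N w_j) × F_{M−1,N−1}(z_1,…,z_{N−1}|w_1,…,w_{M−1}|x_1,…,x_{N−1}). -/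
open Finset

/-!
Each term of `F` depends only on the signed and permuted parameters `u_k = z_{σ(k)}^{±1}`, and is a
product of one-particle weights of the `u_k` and two-particle scattering factors. At
`w_M = a² z_N²` the one-particle weight vanishes for a particle carrying `z_N⁻¹`, and also for a
particle carrying `z_N` that does not sit at site `M`. As only the last particle sits there, the
surviving terms have `u_N = z_N`. In these, the denominator of the scattering factor between `u_k`
and `z_N` cancels against the weights of particle `k` at site `M`, leaving an expression invariant
under `u_k ↦ u_k⁻¹`, which therefore comes out of the sum.
-/

section Sums

variable {A : Type*} [AddCommMonoid A] {n : ℕ}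

/-- The permutation of `Fin (n + 1)` that acts as `σ` on the first `n` elements and fixes the last
one. -/
def permFixLast (σ : Equiv.Perm (Fin n)) : Equiv.Perm (Fin (n + 1)) :=
  finSuccEquivLast.symm.permCongr σ.optionCongr

@[simp]
lemma permFixLast_castSucc (σ : Equiv.Perm (Fin n)) (i : Fin n) :
    permFixLast σ i.castSucc = (σ i).castSucc := by
  simp [permFixLast]

@[simp]
lemma permFixLast_last (σ : Equiv.Perm (Fin n)) : permFixLast σ (Fin.last n) = Fin.last n := by
  simp [permFixLast]

lemma sum_perm_eq_sum_permFixLast (f : Equiv.Perm (Fin (n + 1)) → A)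
    (hf : ∀ σ, σ (Fin.last n) ≠ Fin.last n → f σ = 0) :
    ∑ σ, f σ = ∑ σ : Equiv.Perm (Fin n), f (permFixLast σ) := by
  let e : Option (Fin n) × Equiv.Perm (Fin n) ≃ Equiv.Perm (Fin (n + 1)) :=
    Equiv.Perm.decomposeOption.symm.trans finSuccEquivLast.symm.permCongr
  have he_last (p : Option (Fin n)) (σ : Equiv.Perm (Fin n)) :
      e (p, σ) (Fin.last n) = finSuccEquivLast.symm p := by
    simp [e]
  have he_none (σ : Equiv.Perm (Fin n)) : e (none, σ) = permFixLast σ :=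
    Equiv.ext fun i => by simp [e, permFixLast]
  have he_some (i : Fin n) (σ : Equiv.Perm (Fin n)) : f (e (some i, σ)) = 0 :=
    hf _ (by simp [he_last, Fin.castSucc_ne_last])
  rw [← e.sum_comp, Fintype.sum_prod_type, Fintype.sum_option]
  simp only [he_none, he_some, sum_const_zero, add_zero]

lemma sum_bool_eq_sum_snoc_true (f : (Fin (n + 1) → Bool) → A)
    (hf : ∀ τ, τ (Fin.last n) = false → f τ = 0) :
    ∑ τ, f τ = ∑ τ : Fin n → Bool, f (Fin.snoc τ true) := by
  have h_false (τ : Fin n → Bool) : f (Fin.snoc τ false) = 0 := hf _ (Fin.snoc_last ..)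
  rw [← (Fin.snocEquiv fun _ : Fin (n + 1) => Bool).sum_comp, Fintype.sum_prod_type,
    Fintype.sum_bool]
  simp [Fin.snocEquiv, h_false]

lemma prod_lt_succ_eq_prod_lt_mul_prod_last {P : Type*} [CommMonoid P]
    (f : Fin (n + 1) → Fin (n + 1) → P) :
    ∏ p : Fin (n + 1) × Fin (n + 1) with p.1 < p.2, f p.1 p.2 =
      (∏ p : Fin n × Fin n with p.1 < p.2, f p.1.castSucc p.2.castSucc) *
        ∏ i : Fin n, f i.castSucc (Fin.last n) := by
  have h_last (i : Fin (n + 1)) : ¬ Fin.last n < i := i.le_last.not_gt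
  simp only [prod_filter, Fintype.prod_prod_type, Fin.prod_univ_castSucc, h_last, if_false,
    prod_const_one, mul_one, Fin.castSucc_lt_castSucc_iff, Fin.castSucc_lt_last, if_true,
    prod_mul_distrib]

end Sums

section Weights

variable {K : Type*} [Field K] {M N : ℕ}

/-- The two-particle factor of `F` in terms of the signed parameters `u = z_{σ(j)}^{τ_{σ(j)}}` and
`v = z_{σ(k)}^{τ_{σ(k)}}`, where `j < k`. -/
def scatteringFactor (a u v : K) : K :=
  ((a ^ 2 * u * v - (a ^ 2)⁻¹ * u⁻¹ * v⁻¹) * (a ^ 2 * u⁻¹ * v - (a ^ 2)⁻¹ * u * v⁻¹)) /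
    ((u * v - u⁻¹ * v⁻¹) * (u⁻¹ * v - u * v⁻¹))

/-- The product of all factors of `F` that involve a single particle, at position `x` with signed
parameter `u`. Sites are numbered from `1`, so site `j + 1` carries `w j`. -/
def particleWeight (a b : K) (w : Fin M → K) (x : ℕ) (u : K) : K :=
  (u ^ 2 - (u ^ 2)⁻¹)⁻¹ * (b * a⁻¹ * u⁻¹ - b⁻¹ * a * u) *
    (∏ j, (a * u⁻¹ - a⁻¹ * u * w j)) *
    (∏ j : Fin M with j.val + 1 < x, (a * u⁻¹ * w j - a⁻¹ * u)) *
    ∏ j : Fin M with x ≤ j.val, (a * u - a⁻¹ * u⁻¹ * w j)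

/-- The term of the sum defining `F` in terms of the signed and permuted parameters `u`; here `x k`
is the position of particle `k + 1`, as in `FF`. -/
def betheTerm (a b : K) (w : Fin M → K) (x : ℕ → ℕ) (u : Fin N → K) : K :=
  (∏ k : Fin N, particleWeight a b w (x k) (u k)) *
    ∏ p : Fin N × Fin N with p.1 < p.2, scatteringFactor a (u p.1) (u p.2)

/-- The action of the signed permutation `(σ, τ)` on the parameters `z`. -/
def signedPermute (z : Fin N → K) (σ : Equiv.Perm (Fin N)) (τ : Fin N → Bool) (k : Fin N) : K :=
  z (σ k) ^ eps τ (σ k)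

/-- The factor by which a particle with parameter `u` contributes when a further particle with
parameter `v` is frozen at a new last site with inhomogeneity `a² v²`. -/
def freezingFactor (a v u : K) : K :=
  (a ^ 3 * v ^ 2 * u - a⁻¹ * u⁻¹) * (a ^ 3 * v ^ 2 * u⁻¹ - a⁻¹ * u)

lemma freezingFactor_inv (a v u : K) : freezingFactor a v u⁻¹ = freezingFactor a v u := by
  rw [freezingFactor, freezingFactor, inv_inv, mul_comm]

lemma signedPermute_eq_or_eq_inv (z : Fin N → K) (σ : Equiv.Perm (Fin N)) (τ : Fin N → Bool)
    (k : Fin N) : signedPermute z σ τ k = z (σ k) ∨ signedPermute z σ τ k = (z (σ k))⁻¹ := by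
  cases h : τ (σ k) <;> simp [signedPermute, eps, h]

lemma prod_freezingFactor_signedPermute (a v : K) (z : Fin N → K) (σ : Equiv.Perm (Fin N))
    (τ : Fin N → Bool) :
    ∏ k, freezingFactor a v (signedPermute z σ τ k) = ∏ j, freezingFactor a v (z j) := by
  rw [← Equiv.prod_comp σ fun j => freezingFactor a v (z j)]
  refine prod_congr rfl fun k _ => ?_
  obtain h | h := signedPermute_eq_or_eq_inv z σ τ k <;> rw [h]
  exact freezingFactor_inv ..

lemma signedPermute_permFixLast_snoc (z : Fin N → K) (v : K) (σ : Equiv.Perm (Fin N))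
    (τ : Fin N → Bool) :
    signedPermute (Fin.snoc z v) (permFixLast σ) (Fin.snoc τ true) =
      Fin.snoc (signedPermute z σ τ) v := by
  funext k
  cases k using Fin.lastCases <;> simp [signedPermute, eps]

lemma particleWeight_snoc (a b : K) (w : Fin M → K) (c : K) {x : ℕ} (hx : x ≤ M) (u : K) :
    particleWeight a b (Fin.snoc w c) x u =
      particleWeight a b w x u * ((a * u⁻¹ - a⁻¹ * u * c) * (a * u - a⁻¹ * u⁻¹ * c)) := by
  have h_left : ¬ M + 1 < x := by omega
  simp only [particleWeight, prod_filter, Fin.prod_univ_castSucc, Fin.snoc_castSucc,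
    Fin.snoc_last, Fin.val_castSucc, Fin.val_last, hx, h_left, if_true, if_false]
  ring

lemma particleWeight_snoc_eq_zero_of_le (a b : K) (w : Fin M → K) {x : ℕ} (hx : x ≤ M)
    (v : K) : particleWeight a b (Fin.snoc w (a ^ 2 * v ^ 2)) x v = 0 := by
  have h : a * v - a⁻¹ * v⁻¹ * (a ^ 2 * v ^ 2) = 0 := by field_simp; ring
  rw [particleWeight_snoc a b w _ hx, h, mul_zero, mul_zero]

lemma particleWeight_snoc_inv_eq_zero (a b : K) (w : Fin M → K) (x : ℕ) (v : K) :
    particleWeight a b (Fin.snoc w (a ^ 2 * v ^ 2)) x v⁻¹ = 0 := by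
  have h : a * v - a⁻¹ * v⁻¹ * (a ^ 2 * v ^ 2) = 0 := by field_simp; ring
  simp [particleWeight, Fin.prod_univ_castSucc, h]

lemma particleWeight_snoc_last_site {a : K} (ha : a ≠ 0) (b : K) (w : Fin M → K) {v : K}
    (hv : v ≠ 0) (hv4 : v ^ 4 ≠ 1) :
    particleWeight a b (Fin.snoc w (a ^ 2 * v ^ 2)) (M + 1) v =
      -(a * v) * (b * a⁻¹ * v⁻¹ - b⁻¹ * a * v) *
        ∏ j, (a * v⁻¹ * w j - a⁻¹ * v) * (a * v⁻¹ - a⁻¹ * v * w j) := by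
  have h_den : v ^ 2 - (v ^ 2)⁻¹ ≠ 0 := fun h => hv4 <| by
    field_simp at h
    linear_combination h
  have h_cancel : (v ^ 2 - (v ^ 2)⁻¹)⁻¹ * (a * v⁻¹ - a⁻¹ * v * (a ^ 2 * v ^ 2)) = -(a * v) := by
    rw [inv_mul_eq_iff_eq_mul₀ h_den]
    field_simp
    ring
  have h_right (j : Fin M) : ¬ M + 1 ≤ j.val := by omega
  simp only [particleWeight, prod_filter, Fin.prod_univ_castSucc, Fin.snoc_castSucc,
    Fin.snoc_last, Fin.val_castSucc, Fin.val_last, Fin.is_lt, add_lt_add_iff_right, lt_irrefl,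
    h_right, Nat.not_succ_le_self, if_true, if_false, prod_const_one, mul_one, prod_mul_distrib,
    ← h_cancel]
  ring

lemma scatteringFactor_mul_eq_freezingFactor {a u v : K} (ha : a ≠ 0) (hu : u ≠ 0) (hv : v ≠ 0)
    (huv : u ^ 2 * v ^ 2 ≠ 1) (huv' : u ^ 2 ≠ v ^ 2) :
    scatteringFactor a u v *
        ((a * u⁻¹ - a⁻¹ * u * (a ^ 2 * v ^ 2)) * (a * u - a⁻¹ * u⁻¹ * (a ^ 2 * v ^ 2))) =
      freezingFactor a v u := by
  have h_sum : u * v - u⁻¹ * v⁻¹ ≠ 0 := fun h => huv <| by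
    field_simp at h
    linear_combination h
  have h_diff : u⁻¹ * v - u * v⁻¹ ≠ 0 := fun h => huv' <| by
    field_simp at h
    linear_combination -h
  have h_den : (a * u⁻¹ - a⁻¹ * u * (a ^ 2 * v ^ 2)) * (a * u - a⁻¹ * u⁻¹ * (a ^ 2 * v ^ 2)) =
      (u * v - u⁻¹ * v⁻¹) * (u⁻¹ * v - u * v⁻¹) * (a ^ 2 * v ^ 2) := by
    field_simp
    ring
  rw [scatteringFactor, h_den, ← mul_assoc, div_mul_cancel₀ _ (mul_ne_zero h_sum h_diff),
    freezingFactor]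
  field_simp

lemma betheTerm_snoc (a b : K) (w : Fin M → K) (c : K) {x : ℕ → ℕ} (hx : ∀ k : Fin N, x k ≤ M)
    (hxN : x N = M + 1) (u : Fin N → K) (v : K) :
    betheTerm a b (Fin.snoc w c) x (Fin.snoc u v) =
      particleWeight a b (Fin.snoc w c) (M + 1) v *
        (∏ k, scatteringFactor a (u k) v *
          ((a * (u k)⁻¹ - a⁻¹ * u k * c) * (a * u k - a⁻¹ * (u k)⁻¹ * c))) *
        betheTerm a b w x u := by
  simp only [betheTerm, prod_lt_succ_eq_prod_lt_mul_prod_last fun i j =>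
      scatteringFactor a (Fin.snoc (α := fun _ => K) u v i) (Fin.snoc (α := fun _ => K) u v j),
    Fin.prod_univ_castSucc, Fin.snoc_castSucc, Fin.snoc_last, Fin.val_castSucc, Fin.val_last,
    hxN, particleWeight_snoc a b w c (hx _), prod_mul_distrib]
  ring

lemma betheTerm_eq_zero_of_particleWeight_eq_zero {a b : K} {w : Fin M → K} {x : ℕ → ℕ}
    {u : Fin N → K} (k : Fin N) (hk : particleWeight a b w (x k) (u k) = 0) :
    betheTerm a b w x u = 0 := by
  rw [betheTerm, prod_eq_zero (mem_univ k) hk, zero_mul]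

lemma betheTerm_snoc_eq_zero_of_sign_last_eq_false (a b : K) (w : Fin M → K) (x : ℕ → ℕ)
    (z : Fin N → K) (v : K) (σ : Equiv.Perm (Fin (N + 1))) {τ : Fin (N + 1) → Bool}
    (hτ : τ (Fin.last N) = false) :
    betheTerm a b (Fin.snoc w (a ^ 2 * v ^ 2)) x (signedPermute (Fin.snoc z v) σ τ) = 0 := by
  refine betheTerm_eq_zero_of_particleWeight_eq_zero (σ.symm (Fin.last N)) ?_
  have hu : signedPermute (Fin.snoc z v) σ τ (σ.symm (Fin.last N)) = v⁻¹ := by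
    simp [signedPermute, eps, hτ]
  rw [hu, particleWeight_snoc_inv_eq_zero a b w _ v]

lemma betheTerm_snoc_eq_zero_of_perm_last_ne (a b : K) (w : Fin M → K) {x : ℕ → ℕ}
    (hx : ∀ k : Fin N, x k ≤ M) (z : Fin N → K) (v : K)
    {σ : Equiv.Perm (Fin (N + 1))} (hσ : σ (Fin.last N) ≠ Fin.last N)
    (τ : Fin (N + 1) → Bool) :
    betheTerm a b (Fin.snoc w (a ^ 2 * v ^ 2)) x (signedPermute (Fin.snoc z v) σ τ) = 0 := by
  obtain ⟨k, hk⟩ : ∃ k : Fin N, σ k.castSucc = Fin.last N :=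
    (Fin.exists_castSucc_eq.2 fun h => hσ (σ.symm_apply_eq.1 h).symm).imp
      fun _ => σ.eq_symm_apply.1
  refine betheTerm_eq_zero_of_particleWeight_eq_zero k.castSucc ?_
  rw [Fin.val_castSucc]
  have hu := signedPermute_eq_or_eq_inv (Fin.snoc z v) σ τ k.castSucc
  rw [hk, Fin.snoc_last] at hu
  obtain hu | hu := hu <;> rw [hu]
  · exact particleWeight_snoc_eq_zero_of_le a b w (hx k) v
  · exact particleWeight_snoc_inv_eq_zero a b w _ v

lemma betheTerm_snoc_signedPermute {a : K} (ha : a ≠ 0) (b : K) (w : Fin M → K) {x : ℕ → ℕ}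
    (hx : ∀ k : Fin N, x k ≤ M) (hxN : x N = M + 1) {z : Fin N → K} {v : K}
    (hz : ∀ j, z j ≠ 0) (hv : v ≠ 0) (hzv : ∀ j, z j ^ 2 * v ^ 2 ≠ 1)
    (hzv' : ∀ j, z j ^ 2 ≠ v ^ 2) (σ : Equiv.Perm (Fin N)) (τ : Fin N → Bool) :
    betheTerm a b (Fin.snoc w (a ^ 2 * v ^ 2)) x (Fin.snoc (signedPermute z σ τ) v) =
      particleWeight a b (Fin.snoc w (a ^ 2 * v ^ 2)) (M + 1) v *
        (∏ j, freezingFactor a v (z j)) * betheTerm a b w x (signedPermute z σ τ) := by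
  have hu (k) : signedPermute z σ τ k ≠ 0 := zpow_ne_zero _ (hz _)
  have huv (k) : signedPermute z σ τ k ^ 2 * v ^ 2 ≠ 1 ∧ signedPermute z σ τ k ^ 2 ≠ v ^ 2 := by
    obtain h | h := signedPermute_eq_or_eq_inv z σ τ k <;> rw [h]
    · exact ⟨hzv _, hzv' _⟩
    · have hzk : z (σ k) ^ 2 ≠ 0 := pow_ne_zero 2 (hz _)
      rw [inv_pow, ne_eq, ne_eq, inv_mul_eq_one₀ hzk, ← mul_eq_one_iff_inv_eq₀ hzk]
      exact ⟨hzv' _, hzv _⟩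
  have h_freeze (k) := scatteringFactor_mul_eq_freezingFactor ha (hu k) hv (huv k).1 (huv k).2
  simp only [betheTerm_snoc a b w _ hx hxN, h_freeze, prod_freezingFactor_signedPermute]

lemma sum_betheTerm_snoc {a : K} (ha : a ≠ 0) (b : K) (w : Fin M → K) {x : ℕ → ℕ}
    (hx : ∀ k : Fin N, x k ≤ M) (hxN : x N = M + 1) {z : Fin N → K} {v : K}
    (hz : ∀ j, z j ≠ 0) (hv : v ≠ 0) (hzv : ∀ j, z j ^ 2 * v ^ 2 ≠ 1)
    (hzv' : ∀ j, z j ^ 2 ≠ v ^ 2) :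
    ∑ σ : Equiv.Perm (Fin (N + 1)), ∑ τ : Fin (N + 1) → Bool,
        betheTerm a b (Fin.snoc w (a ^ 2 * v ^ 2)) x (signedPermute (Fin.snoc z v) σ τ) =
      particleWeight a b (Fin.snoc w (a ^ 2 * v ^ 2)) (M + 1) v *
        (∏ j, freezingFactor a v (z j)) *
        ∑ σ : Equiv.Perm (Fin N), ∑ τ : Fin N → Bool,
          betheTerm a b w x (signedPermute z σ τ) := by
  rw [sum_perm_eq_sum_permFixLast _ fun σ hσ => sum_eq_zero fun τ _ =>
    betheTerm_snoc_eq_zero_of_perm_last_ne a b w hx z v hσ τ]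
  simp only [mul_sum]
  refine sum_congr rfl fun σ _ => ?_
  rw [sum_bool_eq_sum_snoc_true _ fun τ hτ =>
    betheTerm_snoc_eq_zero_of_sign_last_eq_false a b w x z v (permFixLast σ) hτ]
  refine sum_congr rfl fun τ _ => ?_
  rw [signedPermute_permFixLast_snoc,
    betheTerm_snoc_signedPermute ha b w hx hxN hz hv hzv hzv']

end Weights

lemma pairFactor_eq_scatteringFactor (a Z₁ Z₂ : ℂ) (t₁ t₂ : ℤ) :
    pairFactor a Z₁ Z₂ t₁ t₂ = scatteringFactor a (Z₁ ^ t₁) (Z₂ ^ t₂) := by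
  simp only [pairFactor, scatteringFactor, zpow_neg, zpow_ofNat]

lemma FF_eq_sum_betheTerm (a b : ℂ) {M N : ℕ} (z : Fin N → ℂ) (w : Fin M → ℂ) (x : ℕ → ℕ) :
    FF a b M N z w x =
      (a ^ 2 - (a ^ 2)⁻¹) ^ N * (∏ j, (-(a ^ 2 * z j ^ 2) + (a ^ 2)⁻¹ * (z j ^ 2)⁻¹)) *
        ∑ σ : Equiv.Perm (Fin N), ∑ τ : Fin N → Bool,
          betheTerm a b w x (signedPermute z σ τ) := by
  simp only [FF, zpow_neg, zpow_ofNat]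
  congr 1
  refine sum_congr rfl fun σ _ => sum_congr rfl fun τ _ => ?_
  rw [← Equiv.prod_comp σ fun j => (z j ^ (2 * eps τ j) - (z j ^ (2 * eps τ j))⁻¹)⁻¹]
  simp only [betheTerm, particleWeight, signedPermute, pairFactor_eq_scatteringFactor,
    prod_mul_distrib, mul_comm (2 : ℤ), zpow_mul, zpow_ofNat]
  ring

lemma FF_snoc {a : ℂ} (ha : a ≠ 0) (b : ℂ) {M N : ℕ} (w : Fin M → ℂ) {x : ℕ → ℕ}
    (hx : ∀ k : Fin N, x k ≤ M) (hxN : x N = M + 1) {z : Fin N → ℂ} {v : ℂ}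
    (hz : ∀ j, z j ≠ 0) (hv : v ≠ 0) (hv4 : v ^ 4 ≠ 1) (hzv : ∀ j, z j ^ 2 * v ^ 2 ≠ 1)
    (hzv' : ∀ j, z j ^ 2 ≠ v ^ 2) :
    FF a b (M + 1) (N + 1) (Fin.snoc z v) (Fin.snoc w (a ^ 2 * v ^ 2)) x =
      (a ^ 2 - (a ^ 2)⁻¹) * (b * a⁻¹ * v⁻¹ - b⁻¹ * a * v) *
        ((∏ j, freezingFactor a v (z j)) * (a ^ 3 * v ^ 2 * v - a⁻¹ * v⁻¹)) *
        (∏ j, (a * v⁻¹ * w j - a⁻¹ * v) * (a * v⁻¹ - a⁻¹ * v * w j)) *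
        FF a b M N z w x := by
  have h_prefactor : a ^ 3 * v ^ 2 * v - a⁻¹ * v⁻¹ =
      (-(a ^ 2 * v ^ 2) + (a ^ 2)⁻¹ * (v ^ 2)⁻¹) * -(a * v) := by
    field_simp
    ring
  rw [FF_eq_sum_betheTerm, FF_eq_sum_betheTerm, sum_betheTerm_snoc ha b w hx hxN hz hv hzv hzv',
    particleWeight_snoc_last_site ha b w hv hv4, h_prefactor, Fin.prod_univ_castSucc]
  simp only [Fin.snoc_castSucc, Fin.snoc_last]
  ring

theorem F_recursion_top_general (a b : ℂ) (M N : ℕ)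
    (z : Fin (N + 1) → ℂ) (w : Fin (M + 1) → ℂ) (x : ℕ → ℕ)
    (ha : a ≠ 0) (hb : b ≠ 0) (hz : ∀ j, z j ≠ 0) (hz4 : ∀ j, z j ^ 4 ≠ 1)
    (hzz : ∀ j k, j ≠ k → z j ^ 2 * z k ^ 2 ≠ 1)
    (hzz' : ∀ j k, j ≠ k → z j ^ 2 ≠ z k ^ 2)
    (hx : ∀ k : Fin N, x k ≤ M) (hlast : x N = M + 1) :
    FF a b (M + 1) (N + 1) z
      (Function.update w (Fin.last M) (a ^ 2 * z (Fin.last N) ^ 2)) x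
    = (a ^ (2:ℤ) - a ^ (-2:ℤ)) *
      (b * a⁻¹ * (z (Fin.last N))⁻¹ - b⁻¹ * a * z (Fin.last N)) *
      (∏ j : Fin (N + 1), (a ^ 3 * z (Fin.last N) ^ 2 * z j - a⁻¹ * (z j)⁻¹)) *
      (∏ j : Fin N,
        (a ^ 3 * z (Fin.last N) ^ 2 * (z (Fin.castSucc j))⁻¹ - a⁻¹ * z (Fin.castSucc j))) *
      (∏ j : Fin M,
        ((a * (z (Fin.last N))⁻¹ * w (Fin.castSucc j) - a⁻¹ * z (Fin.last N)) *
         (a * (z (Fin.last N))⁻¹ - a⁻¹ * z (Fin.last N) * w (Fin.castSucc j)))) *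
      FF a b M N (fun j => z (Fin.castSucc j)) (fun j => w (Fin.castSucc j)) x := by
  obtain ⟨z, v, rfl⟩ : ∃ z' v, z = Fin.snoc z' v := ⟨_, _, (Fin.snoc_init_self z).symm⟩
  obtain ⟨w, c, rfl⟩ : ∃ w' c, w = Fin.snoc w' c := ⟨_, _, (Fin.snoc_init_self w).symm⟩
  have hne (j : Fin N) := Fin.castSucc_ne_last j
  simp only [Fin.forall_fin_succ', Fin.snoc_castSucc, Fin.snoc_last] at hz hz4
  have hzv (j : Fin N) : z j ^ 2 * v ^ 2 ≠ 1 := by simpa using hzz _ _ (hne j)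
  have hzv' (j : Fin N) : z j ^ 2 ≠ v ^ 2 := by simpa using hzz' _ _ (hne j)
  simp only [Fin.update_snoc_last, Fin.prod_univ_castSucc, Fin.snoc_castSucc, Fin.snoc_last,
    FF_snoc ha b w hx hlast hz.1 hz.2 hz4.2 hzv hzv', freezingFactor, prod_mul_distrib,
    zpow_neg, zpow_ofNat]
  ring

/-- Property (4), first case, for `F`: when `x_N = M` (sizes re-parametrized as
`M+1` sites and `N+1` particles, so `z (Fin.last N)` is `z_N` and `x N = M+1`),
setting `w_M = a²z_N²` freezes the boundary and yields the recursion to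
`F_{M-1,N-1}`. -/
theorem F_recursion_top (a b : ℂ) (M N : ℕ)
    (z : Fin (N + 1) → ℂ) (w : Fin (M + 1) → ℂ) (x : ℕ → ℕ)
    (ha : a ≠ 0) (hb : b ≠ 0) (hz : ∀ j, z j ≠ 0) (hz4 : ∀ j, z j ^ 4 ≠ 1)
    (hzz : ∀ j k, j ≠ k → z j ^ 2 * z k ^ 2 ≠ 1)
    (hzz' : ∀ j k, j ≠ k → z j ^ 2 ≠ z k ^ 2)
    (hx1 : ∀ k : Fin (N + 1), 1 ≤ x k.val) (hxM : ∀ k : Fin (N + 1), x k.val ≤ M + 1)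
    (hmono : ∀ j k : Fin (N + 1), j < k → x j.val < x k.val)
    (hlast : x N = M + 1) :
    FF a b (M + 1) (N + 1) z
      (Function.update w (Fin.last M) (a ^ 2 * z (Fin.last N) ^ 2)) x
    = (a ^ (2:ℤ) - a ^ (-2:ℤ)) *
      (b * a⁻¹ * (z (Fin.last N))⁻¹ - b⁻¹ * a * z (Fin.last N)) *
      (∏ j : Fin (N + 1), (a ^ 3 * z (Fin.last N) ^ 2 * z j - a⁻¹ * (z j)⁻¹)) *
      (∏ j : Fin N,
        (a ^ 3 * z (Fin.last N) ^ 2 * (z (Fin.castSucc j))⁻¹ - a⁻¹ * z (Fin.castSucc j))) *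
      (∏ j : Fin M,
        ((a * (z (Fin.last N))⁻¹ * w (Fin.castSucc j) - a⁻¹ * z (Fin.last N)) *
         (a * (z (Fin.last N))⁻¹ - a⁻¹ * z (Fin.last N) * w (Fin.castSucc j)))) *
      FF a b M N (fun j => z (Fin.castSucc j)) (fun j => w (Fin.castSucc j)) x := by
  have hx (k : Fin N) : x k ≤ M := by
    simpa [hlast, Nat.lt_succ_iff] using hmono k.castSucc (Fin.last N) k.castSucc_lt_last
  exact F_recursion_top_general a b M N z w x ha hb hz hz4 hzz hzz' hx hlast
end

section
/- For nonzero complex numbers a, b and nonzero complex variables z_1,…,z_N, w_1,…,w_{M−1}, with z_N⁴ ≠ 1 and z_j z_N ≠ ±1, z_j ≠ ±z_N for j < N, the following identity holds: [(a²−a⁻²)(−a²z_N²+a⁻²z_N⁻²)/(z_N²−z_N⁻²)] · ∏_{j=1}^{N−1} [(a²z_j z_N−a⁻²z_j⁻¹z_N⁻¹)(a²z_j⁻¹z_N−a⁻²z_j z_N⁻¹)] / [(z_j z_N−z_j⁻¹z_N⁻¹)(z_j⁻¹z_N−z_j z_N⁻¹)] · (ba⁻¹z_N⁻¹−b⁻¹az_N)(az_N⁻¹−az_N³)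 ∏_{j=1}^{M−1}(az_N⁻¹−a⁻¹z_N w_j) ∏_{k=1}^{N−1}(az_k⁻¹−az_N²z_k) ∏_{j=1}^{M−1}(az_N⁻¹w_j−a⁻¹z_N) ∏_{k=1}^{N−1}(az_k−az_N²z_k⁻¹) = (a²−a⁻²)(ba⁻¹z_N⁻¹−b⁻¹az_N) ∏_{j=1}^{N}(a³z_N²z_j−a⁻¹z_j⁻¹) ∏_{j=1}^{N−1}(a³z_N²z_j⁻¹−a⁻¹z_j) ∏_{j=1}^{M−1}(az_N⁻¹w_j−a⁻¹z_N)(az_N⁻¹−a⁻¹z_N w_j). -/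
open Finset

/-!
The factors involving `z_N = x` pair up: for `y = z_j`, `y = z_j⁻¹` and `y = x`, the frozen weight
`a y⁻¹ - a x² y` is `-a x` times the denominator `y x - y⁻¹ x⁻¹`, and what remains,
`-a x (a² y x - a⁻² y⁻¹ x⁻¹)`, is the negative of the factor `a³ x² y - a⁻¹ y⁻¹` on the right. The
signs from `z_j` and `z_j⁻¹` cancel each other, and the one from `y = x` cancels the sign in
`-a² x² + a⁻² x⁻²`.
-/

section FrozenFactors

variable {K : Type*} [Field K] {a x y : K}

lemma div_mul_frozen_weight (ha : a ≠ 0) (hx : x ≠ 0) (hy : y ≠ 0)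
    (hone : y * x ≠ 1) (hneg : y * x ≠ -1) :
    (a ^ (2:ℤ) * y * x - a ^ (-2:ℤ) * y⁻¹ * x⁻¹) / (y * x - y⁻¹ * x⁻¹) *
        (a * y⁻¹ - a * x ^ 2 * y) =
      -(a ^ 3 * x ^ 2 * y - a⁻¹ * y⁻¹) := by
  have hden : y * x - y⁻¹ * x⁻¹ ≠ 0 := by
    rw [← mul_inv, sub_ne_zero, ne_comm, Ne, inv_eq_self₀]
    simp [hone, hneg, hx, hy]
  have hweight : a * y⁻¹ - a * x ^ 2 * y = -(a * x) * (y * x - y⁻¹ * x⁻¹) := by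
    field_simp
    ring
  rw [hweight, mul_left_comm, div_mul_cancel₀ _ hden]
  simp only [zpow_neg, zpow_ofNat]
  field_simp

lemma div_mul_frozen_weight_self (ha : a ≠ 0) (hx : x ≠ 0) (hx4 : x ^ 4 ≠ 1) :
    (-(a ^ (2:ℤ) * x ^ (2:ℤ)) + a ^ (-2:ℤ) * x ^ (-2:ℤ)) / (x ^ (2:ℤ) - x ^ (-2:ℤ)) *
        (a * x⁻¹ - a * x ^ 3) =
      a ^ 3 * x ^ 2 * x - a⁻¹ * x⁻¹ := by
  have hone : x * x ≠ 1 := fun h => hx4 (by linear_combination (x * x + 1) * h)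
  have hneg : x * x ≠ -1 := fun h => hx4 (by linear_combination (x * x - 1) * h)
  have hself := div_mul_frozen_weight ha hx hx hone hneg
  simp only [zpow_neg, zpow_ofNat] at hself ⊢
  have hden : x ^ 2 - (x ^ 2)⁻¹ = x * x - x⁻¹ * x⁻¹ := by ring
  rw [hden]
  linear_combination -hself

lemma div_mul_frozen_weight_pair (ha : a ≠ 0) (hx : x ≠ 0) (hy : y ≠ 0)
    (hone : y * x ≠ 1) (hneg : y * x ≠ -1) (hyx : y ≠ x) (hynx : y ≠ -x) :
    ((a ^ (2:ℤ) * y * x - a ^ (-2:ℤ) * y⁻¹ * x⁻¹) *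
          (a ^ (2:ℤ) * y⁻¹ * x - a ^ (-2:ℤ) * y * x⁻¹)) /
        ((y * x - y⁻¹ * x⁻¹) * (y⁻¹ * x - y * x⁻¹)) *
        (a * y⁻¹ - a * x ^ 2 * y) * (a * y - a * x ^ 2 * y⁻¹) =
      (a ^ 3 * x ^ 2 * y - a⁻¹ * y⁻¹) * (a ^ 3 * x ^ 2 * y⁻¹ - a⁻¹ * y) := by
  have hone' : y⁻¹ * x ≠ 1 := by
    rwa [Ne, inv_mul_eq_one₀ hy]
  have hneg' : y⁻¹ * x ≠ -1 := by
    rw [Ne, inv_mul_eq_iff_eq_mul₀ hy]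
    simpa [eq_neg_iff_add_eq_zero, add_comm] using hynx
  have hinv := div_mul_frozen_weight ha hx (inv_ne_zero hy) hone' hneg'
  rw [inv_inv] at hinv
  rw [mul_div_mul_comm, mul_assoc, mul_mul_mul_comm,
    div_mul_frozen_weight ha hx hy hone hneg, hinv, neg_mul_neg]

variable {ι κ : Type*}

lemma prod_div_mul_frozen_weight_pair (s : Finset ι) (z : ι → K) (ha : a ≠ 0) (hx : x ≠ 0)
    (hz : ∀ i ∈ s, z i ≠ 0)
    (hmix : ∀ i ∈ s, z i * x ≠ 1 ∧ z i * x ≠ -1 ∧ z i ≠ x ∧ z i ≠ -x) :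
    (∏ i ∈ s, ((a ^ (2:ℤ) * z i * x - a ^ (-2:ℤ) * (z i)⁻¹ * x⁻¹) *
          (a ^ (2:ℤ) * (z i)⁻¹ * x - a ^ (-2:ℤ) * z i * x⁻¹)) /
        ((z i * x - (z i)⁻¹ * x⁻¹) * ((z i)⁻¹ * x - z i * x⁻¹))) *
        (∏ i ∈ s, (a * (z i)⁻¹ - a * x ^ 2 * z i)) *
        (∏ i ∈ s, (a * z i - a * x ^ 2 * (z i)⁻¹)) =
      (∏ i ∈ s, (a ^ 3 * x ^ 2 * z i - a⁻¹ * (z i)⁻¹)) *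
        ∏ i ∈ s, (a ^ 3 * x ^ 2 * (z i)⁻¹ - a⁻¹ * z i) := by
  simp only [← prod_mul_distrib]
  refine prod_congr rfl fun i hi => ?_
  obtain ⟨hone, hneg, hzx, hznx⟩ := hmix i hi
  exact div_mul_frozen_weight_pair ha hx (hz i hi) hone hneg hzx hznx

/-- Here `x` is `z_N` and `c` is the boundary weight `b a⁻¹ z_N⁻¹ - b⁻¹ a z_N`. -/
theorem frozen_factor_simplification_general (s : Finset ι) (t : Finset κ) (c : K)
    (z : ι → K) (w : κ → K) (ha : a ≠ 0) (hx : x ≠ 0) (hz : ∀ i ∈ s, z i ≠ 0)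
    (hx4 : x ^ 4 ≠ 1)
    (hmix : ∀ i ∈ s, z i * x ≠ 1 ∧ z i * x ≠ -1 ∧ z i ≠ x ∧ z i ≠ -x) :
    ((a ^ (2:ℤ) - a ^ (-2:ℤ)) * (-(a ^ (2:ℤ) * x ^ (2:ℤ)) + a ^ (-2:ℤ) * x ^ (-2:ℤ)) /
        (x ^ (2:ℤ) - x ^ (-2:ℤ))) *
      (∏ i ∈ s, ((a ^ (2:ℤ) * z i * x - a ^ (-2:ℤ) * (z i)⁻¹ * x⁻¹) *
          (a ^ (2:ℤ) * (z i)⁻¹ * x - a ^ (-2:ℤ) * z i * x⁻¹)) /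
        ((z i * x - (z i)⁻¹ * x⁻¹) * ((z i)⁻¹ * x - z i * x⁻¹))) *
      c * (a * x⁻¹ - a * x ^ 3) *
      (∏ j ∈ t, (a * x⁻¹ - a⁻¹ * x * w j)) *
      (∏ i ∈ s, (a * (z i)⁻¹ - a * x ^ 2 * z i)) *
      (∏ j ∈ t, (a * x⁻¹ * w j - a⁻¹ * x)) *
      (∏ i ∈ s, (a * z i - a * x ^ 2 * (z i)⁻¹))
    = (a ^ (2:ℤ) - a ^ (-2:ℤ)) * c *
      ((∏ i ∈ s, (a ^ 3 * x ^ 2 * z i - a⁻¹ * (z i)⁻¹)) * (a ^ 3 * x ^ 2 * x - a⁻¹ * x⁻¹)) *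
      (∏ i ∈ s, (a ^ 3 * x ^ 2 * (z i)⁻¹ - a⁻¹ * z i)) *
      (∏ j ∈ t, ((a * x⁻¹ * w j - a⁻¹ * x) * (a * x⁻¹ - a⁻¹ * x * w j))) := by
  have hself := div_mul_frozen_weight_self ha hx hx4
  have hpair := prod_div_mul_frozen_weight_pair s z ha hx hz hmix
  have hcancel := congrArg₂ (· * ·) hself hpair
  rw [mul_div_assoc, prod_mul_distrib (s := t)]
  linear_combination (a ^ (2:ℤ) - a ^ (-2:ℤ)) * c * (∏ j ∈ t, (a * x⁻¹ - a⁻¹ * x * w j)) *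
    (∏ j ∈ t, (a * x⁻¹ * w j - a⁻¹ * x)) * hcancel

end FrozenFactors

/-- The key intermediate simplification of frozen-boundary factors in the proof of the
recursion (Property (4), case `x_N = M`) for the symmetric function `F_{M,N}`.
Here `z : Fin (N+1) → ℂ` encodes `z_1,…,z_N` (so `z (Fin.last N)` is `z_N` and
`z (Fin.castSucc j)` for `j : Fin N` runs over `z_1,…,z_{N-1}`), and
`w : Fin M → ℂ` encodes `w_1,…,w_{M-1}`. -/
theorem frozen_factor_simplification (N M : ℕ) (a b : ℂ)
    (z : Fin (N + 1) → ℂ) (w : Fin M → ℂ)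
    (ha : a ≠ 0) (hb : b ≠ 0) (hz : ∀ j, z j ≠ 0) (hw : ∀ j, w j ≠ 0)
    (hzN4 : z (Fin.last N) ^ 4 ≠ 1)
    (hmix : ∀ j : Fin N,
      z (Fin.castSucc j) * z (Fin.last N) ≠ 1 ∧
      z (Fin.castSucc j) * z (Fin.last N) ≠ -1 ∧
      z (Fin.castSucc j) ≠ z (Fin.last N) ∧
      z (Fin.castSucc j) ≠ -z (Fin.last N)) :
    ((a ^ (2:ℤ) - a ^ (-2:ℤ)) *
        (-(a ^ (2:ℤ) * z (Fin.last N) ^ (2:ℤ)) + a ^ (-2:ℤ) * z (Fin.last N) ^ (-2:ℤ)) /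
        (z (Fin.last N) ^ (2:ℤ) - z (Fin.last N) ^ (-2:ℤ))) *
      (∏ j : Fin N,
        ((a ^ (2:ℤ) * z (Fin.castSucc j) * z (Fin.last N)
            - a ^ (-2:ℤ) * (z (Fin.castSucc j))⁻¹ * (z (Fin.last N))⁻¹) *
          (a ^ (2:ℤ) * (z (Fin.castSucc j))⁻¹ * z (Fin.last N)
            - a ^ (-2:ℤ) * z (Fin.castSucc j) * (z (Fin.last N))⁻¹)) /
        ((z (Fin.castSucc j) * z (Fin.last N)
            - (z (Fin.castSucc j))⁻¹ * (z (Fin.last N))⁻¹) *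
          ((z (Fin.castSucc j))⁻¹ * z (Fin.last N)
            - z (Fin.castSucc j) * (z (Fin.last N))⁻¹))) *
      (b * a⁻¹ * (z (Fin.last N))⁻¹ - b⁻¹ * a * z (Fin.last N)) *
      (a * (z (Fin.last N))⁻¹ - a * z (Fin.last N) ^ 3) *
      (∏ j, (a * (z (Fin.last N))⁻¹ - a⁻¹ * z (Fin.last N) * w j)) *
      (∏ k : Fin N, (a * (z (Fin.castSucc k))⁻¹ - a * z (Fin.last N) ^ 2 * z (Fin.castSucc k))) *
      (∏ j, (a * (z (Fin.last N))⁻¹ * w j - a⁻¹ * z (Fin.last N))) *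
      (∏ k : Fin N, (a * z (Fin.castSucc k) - a * z (Fin.last N) ^ 2 * (z (Fin.castSucc k))⁻¹))
    = (a ^ (2:ℤ) - a ^ (-2:ℤ)) *
      (b * a⁻¹ * (z (Fin.last N))⁻¹ - b⁻¹ * a * z (Fin.last N)) *
      (∏ j : Fin (N + 1), (a ^ 3 * z (Fin.last N) ^ 2 * z j - a⁻¹ * (z j)⁻¹)) *
      (∏ j : Fin N, (a ^ 3 * z (Fin.last N) ^ 2 * (z (Fin.castSucc j))⁻¹ - a⁻¹ * z (Fin.castSucc j))) *
      (∏ j, ((a * (z (Fin.last N))⁻¹ * w j - a⁻¹ * z (Fin.last N)) *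
        (a * (z (Fin.last N))⁻¹ - a⁻¹ * z (Fin.last N) * w j))) := by
  rw [Fin.prod_univ_castSucc]
  exact frozen_factor_simplification_general univ univ _ (fun j => z (Fin.castSucc j)) w ha (hz _)
    (fun j _ => hz _) hzN4 fun j _ => hmix j
end
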